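/- Let T > 0, let a : ℝ → ℝ be T-periodic and locally integrable satisfying condition (a*), and for μ > 0 set a_μ(t) = a⁺(t) − μ a⁻(t), where a⁺ and a⁻ are the positive and negative parts of a. Let g ∈ C¹([0,∞)) satisfy (g*) and (gs). Then there exists μ* > 0 such that for every μ > μ* and every integer k ≥ 2, the equation u'' + a_μ(t) g(u) = 0 has a positive subharmonic solution of order k. -/

import Mathlib

open MeasureTheory Set Filter

/-- `u` is a solution of `u'' + F(t,u) = 0`: `u` is of class `C¹` and its derivative `u'`
is locally absolutely continuous (it is the integral of a locally integrable function),
with `u'' + F(t, u(t)) = 0` for a.e. `t`. -/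
def IsSol (F : ℝ → ℝ → ℝ) (u : ℝ → ℝ) : Prop :=
  ∃ u' : ℝ → ℝ,
    (∀ t, HasDerivAt u (u' t) t) ∧
    MeasureTheory.LocallyIntegrable (fun s => F s (u s)) MeasureTheory.volume ∧
    ∀ t, u' t = u' 0 - ∫ s in (0:ℝ)..t, F s (u s)

/-- `q ≻ 0` on `I` : `q ≥ 0` a.e. on `I` and `q ≢ 0` on `I`. -/
def PosOn (q : ℝ → ℝ) (I : Set ℝ) : Prop :=
  (∀ᵐ t ∂(MeasureTheory.volume.restrict I), 0 ≤ q t) ∧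
  ¬ (∀ᵐ t ∂(MeasureTheory.volume.restrict I), q t = 0)

/-- Condition `(q*)`: `[0,T]` splits into `m` closed intervals where `q ≻ 0`
separated by `m` closed intervals where `q ≺ 0`. -/
def SignCond (q : ℝ → ℝ) (T : ℝ) (m : ℕ) : Prop :=
  ∃ σ : ℕ → ℝ, σ 0 = 0 ∧ σ (2*m) = T ∧ (∀ i < 2*m, σ i < σ (i+1)) ∧
    (∀ i < m, PosOn q (Set.Icc (σ (2*i)) (σ (2*i+1)))) ∧
    (∀ i < m, PosOn (fun t => - q t) (Set.Icc (σ (2*i+1)) (σ (2*i+2))))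

/-- A subharmonic solution of order `k`: `kT`-periodic but not `ℓT`-periodic
for `ℓ = 1, …, k-1`. -/
def IsSubharmonic (u : ℝ → ℝ) (T : ℝ) (k : ℕ) : Prop :=
  Function.Periodic u (k * T) ∧ ∀ ℓ : ℕ, 1 ≤ ℓ → ℓ < k → ¬ Function.Periodic u (ℓ * T)

/-- `u` and `v` belong to the same periodicity class. -/
def SameClass (u v : ℝ → ℝ) (T : ℝ) : Prop :=
  ∃ ℓ : ℤ, ∀ t, v t = u (t + ℓ * T)

/-!
After a shift of time, `n = a⁻` vanishes a.e. on `[0, σ]`, where `p = a⁺` has positive mass, while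
`n` has mass immediately after `σ` and immediately before the end `T` of the period. Let `β` be a
small `T`-periodic function with `β'' = -(Γ p - lam n)`; it is an upper solution once `μ` is large.
On `[0, σ]` the nonlinearity is continued linearly above a high level; on `[σ, kT]` it is evaluated
at `min u β`. The truncated equation has Lipschitz nonlinearities, so its solutions depend
continuously on the initial data `(u(0), u'(0))`, and Poincaré–Miranda on a rectangle of data with
`0 ≤ u(0) ≤ β(0)` and slope at least `4 r / σ`, where `β ≤ r`, yields a `kT`-periodic solution.

Concavity bounds it on `[0, σ]` independently of the truncation, and for `μ` large it stays below
`β` on `[σ, kT]`: a solution rising above `β` would never come back. So the solution solves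
the original equation. The prescribed slope drives it above `β` somewhere in `[0, σ]`, and as it is
below `β` during the `k - 1` later periods, `ℓT` is not a period for `ℓ < k`.
-/

/-! ### The Poincaré–Miranda theorem -/

theorem exists_continuous_arg {X : Type*} [TopologicalSpace X] [SimplyConnectedSpace X]
    [LocallyPathConnectedSpace X] {F : X → ℂ} (hF : Continuous F) (hF0 : ∀ z, F z ≠ 0) (z₀ : X) :
    ∃ θ : X → ℝ, Continuous θ ∧ θ z₀ = (F z₀).arg ∧
      ∀ z, F z = ‖F z‖ * Complex.exp (θ z * Complex.I) := by
  obtain ⟨ℓ, ⟨hℓ₀, hℓ⟩, -⟩ := Complex.isCoveringMap_exp.existsUnique_continuousMap_lifts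
    ⟨fun z => (⟨F z, hF0 z⟩ : {z : ℂ // z ≠ 0}), by fun_prop⟩ z₀
    (Complex.log (F z₀)) (by simp [Complex.exp_log (hF0 _)])
  have hexp (z : X) : Complex.exp (ℓ z) = F z := congrArg Subtype.val (congrFun hℓ z)
  refine ⟨fun z => (ℓ z).im, by fun_prop, by simp only [hℓ₀, Complex.log_im], fun z => ?_⟩
  rw [← hexp, Complex.norm_exp, Complex.ofReal_exp, ← Complex.exp_add, Complex.re_add_im]

theorem lt_of_forall_ne {φ : ℝ → ℝ} (hφ : Continuous φ) {a c : ℝ} (hne : ∀ t, φ t ≠ c)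
    (ha : φ a < c) (b : ℝ) : φ b < c := by
  by_contra! hb
  obtain ⟨t, ht⟩ := mem_range_of_exists_le_of_exists_ge hφ ⟨a, ha.le⟩ ⟨b, hb⟩
  exact hne t ht

theorem gt_of_forall_ne {φ : ℝ → ℝ} (hφ : Continuous φ) {a c : ℝ} (hne : ∀ t, φ t ≠ c)
    (ha : c < φ a) (b : ℝ) : c < φ b := by
  have := lt_of_forall_ne hφ.neg (c := -c) (fun t h => hne t (neg_injective h))
    (neg_lt_neg ha) b
  exact neg_lt_neg_iff.mp this

/- Along the boundary the argument of `F` is trapped: starting at the corner `(xl, yl)` and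
going round either way to `(xr, yr)`, it ends up above `π / 2` one way and below it the other. -/
theorem exists_eq_zero_of_sign {F : ℝ × ℝ → ℂ} (hF : Continuous F) {xl xr yl yr : ℝ}
    (hbot : ∀ x, 0 < (F (x, yl)).re) (htop : ∀ x, (F (x, yr)).re < 0)
    (hleft : ∀ y, (F (xl, y)).re = 0 → 0 ≤ (F (xl, y)).im)
    (hright : ∀ y, (F (xr, y)).re = 0 → (F (xr, y)).im ≤ 0) : ∃ z, F z = 0 := by
  by_contra! hF0
  obtain ⟨θ, hθ, hθ₀, hpolar⟩ := exists_continuous_arg hF hF0 (xl, yl)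
  have hpos (z) : 0 < ‖F z‖ := norm_pos_iff.mpr (hF0 z)
  have hre (z) : (F z).re = ‖F z‖ * Real.cos (θ z) := by
    conv_lhs => rw [hpolar z]
    rw [Complex.re_ofReal_mul, Complex.exp_ofReal_mul_I_re]
  have him (z) : (F z).im = ‖F z‖ * Real.sin (θ z) := by
    conv_lhs => rw [hpolar z]
    rw [Complex.im_ofReal_mul, Complex.exp_ofReal_mul_I_im]
  have at_pi (z) (h : θ z = Real.pi / 2) : (F z).re = 0 ∧ 0 < (F z).im := by
    simp [hre, him, h, hF0 z]
  have at_neg_pi (z) (h : θ z = -(Real.pi / 2)) : (F z).re = 0 ∧ (F z).im < 0 := by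
    simp [hre, him, h, hF0 z]
  have corner : |θ (xl, yl)| < Real.pi / 2 := by
    rw [hθ₀, Complex.abs_arg_lt_pi_div_two_iff]
    exact .inl (hbot xl)
  have left_top : Real.pi / 2 < θ (xl, yr) := by
    have hlow := gt_of_forall_ne (hθ.comp (Continuous.prodMk_right xl))
      (fun y h => (at_neg_pi _ h).2.not_ge (hleft y (at_neg_pi _ h).1)) (abs_lt.mp corner).1 yr
    by_contra! h
    have := Real.cos_nonneg_of_neg_pi_div_two_le_of_le hlow.le h
    exact (htop xl).not_ge (hre (xl, yr) ▸ mul_nonneg (hpos _).le this)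
  have right_top : Real.pi / 2 < θ (xr, yr) :=
    gt_of_forall_ne (hθ.comp (Continuous.prodMk_left yr))
      (fun x h => (htop x).ne (at_pi _ h).1) left_top xr
  have right_bot : θ (xr, yl) < Real.pi / 2 :=
    lt_of_forall_ne (hθ.comp (Continuous.prodMk_left yl))
      (fun x h => (hbot x).ne' (at_pi _ h).1) (abs_lt.mp corner).2 xr
  have right_top' : θ (xr, yr) < Real.pi / 2 :=
    lt_of_forall_ne (hθ.comp (Continuous.prodMk_right xr))
      (fun y h => (at_pi _ h).2.not_ge (hright y (at_pi _ h).1)) right_bot yr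
  exact right_top.not_gt right_top'

theorem exists_mem_Icc_eq_zero_of_sign {F₁ F₂ : ℝ × ℝ → ℝ} (hF₁ : Continuous F₁)
    (hF₂ : Continuous F₂) {xl xr yl yr : ℝ} (hx : xl ≤ xr) (hy : yl ≤ yr)
    (hbot : ∀ x ∈ Icc xl xr, 0 < F₁ (x, yl)) (htop : ∀ x ∈ Icc xl xr, F₁ (x, yr) < 0)
    (hleft : ∀ y ∈ Icc yl yr, F₁ (xl, y) = 0 → 0 ≤ F₂ (xl, y))
    (hright : ∀ y ∈ Icc yl yr, F₁ (xr, y) = 0 → F₂ (xr, y) ≤ 0) :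
    ∃ x ∈ Icc xl xr, ∃ y ∈ Icc yl yr, F₁ (x, y) = 0 ∧ F₂ (x, y) = 0 := by
  let X := projIcc xl xr hx
  let Y := projIcc yl yr hy
  have hc : Continuous fun z : ℝ × ℝ => ((X z.1 : ℝ), (Y z.2 : ℝ)) := by
    have hX : Continuous X := continuous_projIcc
    have hY : Continuous Y := continuous_projIcc
    fun_prop
  obtain ⟨z, hz⟩ := exists_eq_zero_of_sign (xl := xl) (xr := xr) (yl := yl) (yr := yr)
    (F := fun z => (⟨F₁ (X z.1, Y z.2), F₂ (X z.1, Y z.2)⟩ : ℂ))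
    (Complex.equivRealProdCLM.symm.continuous.comp ((hF₁.comp hc).prodMk (hF₂.comp hc)))
    (fun x => by simpa [Y] using hbot _ (X x).2) (fun x => by simpa [Y] using htop _ (X x).2)
    (fun y => by simpa [X] using hleft _ (Y y).2) (fun y => by simpa [X] using hright _ (Y y).2)
  exact ⟨X z.1, (X z.1).2, Y z.2, (Y z.2).2, congrArg Complex.re hz, congrArg Complex.im hz⟩

/-! ### Solutions of `u'' + F = 0` -/

/-- `u` is a `C¹` function with derivative `v`, and `u'' + F = 0` on `S` in the sense of
Carathéodory: on `S` the slope `v` is a primitive of `-F`. The equation `u'' + f(t, u) = 0` is the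
case `F = fun t => f t (u t)`. Only the equation is restricted to `S`, so that solutions on
intervals need no one-sided derivatives. -/
structure SolvesOn (F u v : ℝ → ℝ) (S : Set ℝ) : Prop where
  hasDerivAt : ∀ t, HasDerivAt u (v t) t
  intervalIntegrable : ∀ a b, IntervalIntegrable F volume a b
  slope_sub : ∀ a ∈ S, ∀ b ∈ S, v b - v a = -∫ t in a..b, F t

theorem solvesOn_primitive {F : ℝ → ℝ} (hF : ∀ a b, IntervalIntegrable F volume a b) (x y : ℝ) :
    SolvesOn F (fun t => x + ∫ s in (0 : ℝ)..t, (y - ∫ r in (0 : ℝ)..s, F r))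
      (fun t => y - ∫ s in (0 : ℝ)..t, F s) univ where
  hasDerivAt t := ((continuous_const.sub (intervalIntegral.continuous_primitive hF
    0)).integral_hasStrictDerivAt 0 t).hasDerivAt.const_add x
  intervalIntegrable := hF
  slope_sub a _ b _ := by
    rw [← intervalIntegral.integral_interval_sub_left (hF 0 b) (hF 0 a)]
    ring

theorem mul_sub_le_sub_of_forall_le_deriv {u v : ℝ → ℝ} (hu : ∀ t, HasDerivAt u (v t) t)
    {a b c : ℝ} (hab : a ≤ b) (hv : ∀ t ∈ Ioo a b, c ≤ v t) : c * (b - a) ≤ u b - u a := by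
  refine (convex_Icc a b).mul_sub_le_image_sub_of_le_deriv
    (fun t _ => (hu t).continuousAt.continuousWithinAt)
    (fun t _ => (hu t).differentiableAt.differentiableWithinAt) (fun t ht => ?_)
    a (left_mem_Icc.mpr hab) b (right_mem_Icc.mpr hab) hab
  rw [(hu t).deriv]
  exact hv t (interior_Icc (a := a) ▸ ht)

theorem sub_le_mul_sub_of_forall_deriv_le {u v : ℝ → ℝ} (hu : ∀ t, HasDerivAt u (v t) t)
    {a b c : ℝ} (hab : a ≤ b) (hv : ∀ t ∈ Ioo a b, v t ≤ c) : u b - u a ≤ c * (b - a) := by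
  have := mul_sub_le_sub_of_forall_le_deriv (fun t => (hu t).neg) hab (c := -c)
    fun t ht => neg_le_neg (hv t ht)
  simp only [Pi.neg_apply] at this
  linarith

namespace SolvesOn

variable {F G u v : ℝ → ℝ} {S : Set ℝ} {s e : ℝ}

theorem continuous (h : SolvesOn F u v S) : Continuous u :=
  continuous_iff_continuousAt.mpr fun t => (h.hasDerivAt t).continuousAt

theorem mono (h : SolvesOn F u v S) {S' : Set ℝ} (hS : S' ⊆ S) : SolvesOn F u v S' :=
  ⟨h.hasDerivAt, h.intervalIntegrable, fun a ha b hb => h.slope_sub a (hS ha) b (hS hb)⟩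

theorem congr (h : SolvesOn F u v (Icc s e)) (hG : ∀ a b, IntervalIntegrable G volume a b)
    (hFG : EqOn F G (Icc s e)) : SolvesOn G u v (Icc s e) where
  hasDerivAt := h.hasDerivAt
  intervalIntegrable := hG
  slope_sub a ha b hb := by
    rw [h.slope_sub a ha b hb,
      intervalIntegral.integral_congr fun t ht => hFG (uIcc_subset_Icc ha hb ht)]

theorem slope_eq (h : SolvesOn F u v S) {a b : ℝ} (ha : a ∈ S) (hb : b ∈ S) :
    v b = v a - ∫ t in a..b, F t := by
  linarith [h.slope_sub a ha b hb]

theorem continuousOn_slope (h : SolvesOn F u v S) : ContinuousOn v S := by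
  rcases S.eq_empty_or_nonempty with rfl | ⟨a, ha⟩
  · exact continuousOn_empty v
  · exact (continuous_const.sub (intervalIntegral.continuous_primitive
      h.intervalIntegrable a)).continuousOn.congr fun b hb => h.slope_eq ha hb

theorem neg (h : SolvesOn F u v S) : SolvesOn (-F) (-u) (-v) S where
  hasDerivAt t := (h.hasDerivAt t).neg
  intervalIntegrable a b := (h.intervalIntegrable a b).neg
  slope_sub a ha b hb := by
    simp only [Pi.neg_apply, intervalIntegral.integral_neg]
    linarith [h.slope_sub a ha b hb]

theorem sub {u' v' : ℝ → ℝ} (h : SolvesOn F u v S) (h' : SolvesOn G u' v' S) :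
    SolvesOn (F - G) (u - u') (v - v') S where
  hasDerivAt t := (h.hasDerivAt t).sub (h'.hasDerivAt t)
  intervalIntegrable a b := (h.intervalIntegrable a b).sub (h'.intervalIntegrable a b)
  slope_sub a ha b hb := by
    simp only [Pi.sub_apply,
      intervalIntegral.integral_sub (h.intervalIntegrable a b) (h'.intervalIntegrable a b)]
    linarith [h.slope_sub a ha b hb, h'.slope_sub a ha b hb]

theorem reflect (h : SolvesOn F u v S) (c : ℝ) :
    SolvesOn (fun t => F (c - t)) (fun t => u (c - t)) (fun t => -v (c - t))
      ((fun t => c - t) ⁻¹' S) where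
  hasDerivAt t := (h.hasDerivAt (c - t)).comp_const_sub c t
  intervalIntegrable a b := by
    simpa using (h.intervalIntegrable (c - a) (c - b)).comp_sub_left c
  slope_sub a ha b hb := by
    rw [intervalIntegral.integral_comp_sub_left]
    linarith [h.slope_sub _ hb _ ha]

theorem comp_add_right (h : SolvesOn F u v S) (c : ℝ) :
    SolvesOn (fun t => F (t + c)) (fun t => u (t + c)) (fun t => v (t + c))
      ((fun t => t + c) ⁻¹' S) where
  hasDerivAt t := (h.hasDerivAt (t + c)).comp_add_const t c
  intervalIntegrable a b := by
    simpa using (h.intervalIntegrable (a + c) (b + c)).comp_add_right c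
  slope_sub a ha b hb := by
    rw [intervalIntegral.integral_comp_add_right]
    exact h.slope_sub _ ha _ hb

theorem sub_integral_le_slope (h : SolvesOn F u v S) (hse : s ≤ e) (hs : s ∈ S) (he : e ∈ S)
    (hG : IntervalIntegrable G volume s e) (hFG : ∀ t ∈ Ioo s e, F t ≤ G t) :
    v s - ∫ t in s..e, G t ≤ v e := by
  rw [h.slope_eq hs he]
  gcongr
  exact intervalIntegral.integral_mono_on_of_le_Ioo hse (h.intervalIntegrable s e) hG hFG

theorem antitoneOn_slope (h : SolvesOn F u v (Icc s e)) (hF : ∀ t ∈ Ioo s e, 0 ≤ F t) :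
    AntitoneOn v (Icc s e) := by
  intro x hx y hy hxy
  have := h.neg.sub_integral_le_slope hxy hx hy (G := 0) intervalIntegrable_const
    fun t ht => neg_nonpos.mpr (hF t ⟨hx.1.trans_lt ht.1, ht.2.trans_le hy.2⟩)
  simpa using this

end SolvesOn

/-! ### A maximum principle -/

namespace SolvesOn

variable {F w w' : ℝ → ℝ} {s e : ℝ}

theorem slope_le_slope_of_nonneg (h : SolvesOn F w w' (Icc s e))
    (hF : ∀ t ∈ Ioo s e, 0 ≤ w t → F t ≤ 0) {x y : ℝ} (hsx : s ≤ x) (hxy : x ≤ y) (hye : y ≤ e)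
    (hw : ∀ t ∈ Ioo x y, 0 ≤ w t) : w' x ≤ w' y := by
  have := h.sub_integral_le_slope hxy ⟨hsx, hxy.trans hye⟩ ⟨hsx.trans hxy, hye⟩ (G := 0)
    intervalIntegrable_const
    fun t ht => hF t ⟨hsx.trans_lt ht.1, ht.2.trans_le hye⟩ (hw t ht)
  simpa using this

theorem slope_pos_of_nonneg_of_slope_pos (h : SolvesOn F w w' (Icc s e))
    (hF : ∀ t ∈ Ioo s e, 0 ≤ w t → F t ≤ 0) (hw : 0 ≤ w s) (hw' : 0 < w' s) :
    ∀ t ∈ Icc s e, 0 < w' t := by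
  by_contra! hneg
  let A := {t ∈ Icc s e | w' t ≤ 0}
  have hA : IsCompact A :=
    isCompact_Icc.of_isClosed_subset
      (isClosed_Icc.isClosed_le h.continuousOn_slope continuousOn_const) (sep_subset _ _)
  obtain ⟨c, ⟨hc, hc'⟩, hleast⟩ := hA.exists_isLeast hneg
  have hpos (t : ℝ) (ht : t ∈ Ioo s c) : 0 ≤ w' t := by
    by_contra! hlt
    exact ht.2.not_ge (hleast ⟨⟨ht.1.le, ht.2.le.trans hc.2⟩, hlt.le⟩)
  have hwt (t : ℝ) (ht : t ∈ Ioo s c) : 0 ≤ w t := by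
    have := mul_sub_le_sub_of_forall_le_deriv h.hasDerivAt ht.1.le (c := 0)
      fun x hx => hpos x ⟨hx.1, hx.2.trans ht.2⟩
    linarith
  linarith [h.slope_le_slope_of_nonneg hF le_rfl hc.1 hc.2 hwt]

theorem slope_le_slope_of_slope_pos (h : SolvesOn F w w' (Icc s e))
    (hF : ∀ t ∈ Ioo s e, 0 ≤ w t → F t ≤ 0) (hw : 0 ≤ w s) (hw' : 0 < w' s)
    {t : ℝ} (ht : t ∈ Icc s e) : w' s ≤ w' t := by
  refine h.slope_le_slope_of_nonneg hF le_rfl ht.1 ht.2 fun x hx => ?_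
  have := mul_sub_le_sub_of_forall_le_deriv h.hasDerivAt hx.1.le (c := 0)
    fun y hy => (h.slope_pos_of_nonneg_of_slope_pos hF hw hw' y
      ⟨hy.1.le, hy.2.le.trans (hx.2.le.trans ht.2)⟩).le
  linarith

theorem mul_sub_le_sub_of_slope_pos (h : SolvesOn F w w' (Icc s e))
    (hF : ∀ t ∈ Ioo s e, 0 ≤ w t → F t ≤ 0) (hw : 0 ≤ w s) (hw' : 0 < w' s)
    {t : ℝ} (ht : t ∈ Icc s e) : w' s * (t - s) ≤ w t - w s :=
  mul_sub_le_sub_of_forall_le_deriv h.hasDerivAt ht.1 fun _ hx =>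
    h.slope_le_slope_of_slope_pos hF hw hw' ⟨hx.1.le, hx.2.le.trans ht.2⟩

theorem nonpos_of_endpoints (h : SolvesOn F w w' (Icc s e))
    (hF : ∀ t ∈ Ioo s e, 0 ≤ w t → F t ≤ 0) (hs : w s ≤ 0) (he : w e ≤ 0) :
    ∀ t ∈ Icc s e, w t ≤ 0 := by
  by_contra! ⟨t, ht, hwt⟩
  have hA : IsCompact {x ∈ Icc s t | w x ≤ 0} :=
    isCompact_Icc.of_isClosed_subset
      (isClosed_Icc.isClosed_le h.continuous.continuousOn continuousOn_const) (sep_subset _ _)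
  obtain ⟨c, ⟨hc, hwc⟩, hgreatest⟩ := hA.exists_isGreatest ⟨s, left_mem_Icc.mpr ht.1, hs⟩
  have hct : c < t := hc.2.lt_of_ne fun h => hwt.not_ge (h ▸ hwc)
  obtain ⟨x, hx, hslope⟩ := exists_hasDerivAt_eq_slope w w' hct h.continuous.continuousOn
    fun x _ => h.hasDerivAt x
  have hwx : 0 < w x := by
    by_contra! hle
    exact hx.1.not_ge (hgreatest ⟨⟨hc.1.trans hx.1.le, hx.2.le⟩, hle⟩)
  have hw'x : 0 < w' x := hslope ▸ div_pos (by linarith) (by linarith)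
  have hsx : s ≤ x := hc.1.trans hx.1.le
  have hxe : x ≤ e := hx.2.le.trans ht.2
  have := (h.mono (Icc_subset_Icc_left hsx)).mul_sub_le_sub_of_slope_pos
    (fun y hy => hF y ⟨hsx.trans_lt hy.1, hy.2⟩) hwx.le hw'x (right_mem_Icc.mpr hxe)
  linarith [mul_nonneg hw'x.le (sub_nonneg.mpr hxe)]

theorem nonneg_of_endpoints (h : SolvesOn F w w' (Icc s e))
    (hF : ∀ t ∈ Ioo s e, w t ≤ 0 → 0 ≤ F t) (hs : 0 ≤ w s) (he : 0 ≤ w e) :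
    ∀ t ∈ Icc s e, 0 ≤ w t := fun t ht =>
  neg_nonpos.mp (h.neg.nonpos_of_endpoints
    (fun x hx hwx => neg_nonpos.mpr (hF x hx (neg_nonneg.mp hwx)))
    (neg_nonpos.mpr hs) (neg_nonpos.mpr he) t ht)

end SolvesOn

/-! ### The initial value problem -/

/-- Every `f(t, ·)` is Lipschitz with constant `L t`, and `L` is locally integrable. -/
structure HasLipschitzBound (f : ℝ → ℝ → ℝ) (L : ℝ → ℝ) : Prop where
  nonneg : ∀ t, 0 ≤ L t
  intervalIntegrable : ∀ a b, IntervalIntegrable L volume a b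
  abs_sub_le : ∀ t s s', |f t s - f t s'| ≤ L t * |s - s'|

/-- The global Carathéodory conditions on `f` for unique solvability of `u'' + f(t, u) = 0`: a
locally integrable Lipschitz bound, and local integrability of `f(t, u(t))` for continuous `u`. -/
structure IsLipschitzCaratheodory (f : ℝ → ℝ → ℝ) : Prop where
  exists_lipschitzBound : ∃ L : ℝ → ℝ, HasLipschitzBound f L
  intervalIntegrable_comp : ∀ u : ℝ → ℝ, Continuous u →
    ∀ a b, IntervalIntegrable (fun t => f t (u t)) volume a b

namespace IsLipschitzCaratheodory

theorem mul {q : ℝ → ℝ} {φ : ℝ → ℝ → ℝ} {L : ℝ} (hq : ∀ a b, IntervalIntegrable q volume a b)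
    (hφ : Continuous fun z : ℝ × ℝ => φ z.1 z.2) (hL : ∀ t s s', |φ t s - φ t s'| ≤ L * |s - s'|) :
    IsLipschitzCaratheodory fun t s => q t * φ t s where
  exists_lipschitzBound := by
    have hL₀ : 0 ≤ L := by simpa using (abs_nonneg _).trans (hL 0 1 0)
    refine ⟨fun t => |q t| * L, fun t => by positivity, fun a b => (hq a b).abs.mul_const L,
      fun t s s' => ?_⟩
    rw [← mul_sub, abs_mul, mul_assoc]
    gcongr
    exact hL t s s'
  intervalIntegrable_comp u hu a b :=
    (hq a b).mul_continuousOn (hφ.comp (continuous_id.prodMk hu)).continuousOn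

theorem ite {f₁ f₂ : ℝ → ℝ → ℝ} (h₁ : IsLipschitzCaratheodory f₁)
    (h₂ : IsLipschitzCaratheodory f₂) (σ : ℝ) :
    IsLipschitzCaratheodory fun t s => if t ≤ σ then f₁ t s else f₂ t s where
  exists_lipschitzBound := by
    obtain ⟨L₁, hL₁, hi₁, hf₁⟩ := h₁.exists_lipschitzBound
    obtain ⟨L₂, hL₂, hi₂, hf₂⟩ := h₂.exists_lipschitzBound
    refine ⟨fun t => L₁ t + L₂ t, fun t => add_nonneg (hL₁ t) (hL₂ t),
      fun a b => (hi₁ a b).add (hi₂ a b), fun t s s' => ?_⟩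
    have bound₁ := mul_nonneg (hL₁ t) (abs_nonneg (s - s'))
    have bound₂ := mul_nonneg (hL₂ t) (abs_nonneg (s - s'))
    split_ifs
    · linarith [hf₁ t s s']
    · linarith [hf₂ t s s']
  intervalIntegrable_comp u hu a b :=
    have h₁u := h₁.intervalIntegrable_comp u hu a b
    have h₂u := h₂.intervalIntegrable_comp u hu a b
    ⟨Integrable.piecewise (s := Iic σ) measurableSet_Iic h₁u.1.integrableOn h₂u.1.integrableOn,
      Integrable.piecewise (s := Iic σ) measurableSet_Iic h₁u.2.integrableOn h₂u.2.integrableOn⟩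

end IsLipschitzCaratheodory

/-- The slope `z.2 - ∫₀ᵗ f(s, w(s)) ds` of the Picard iterate of `w` with initial data `z`. -/
noncomputable def picardSlope (f : ℝ → ℝ → ℝ) (z : ℝ × ℝ) (w : ℝ → ℝ) (t : ℝ) : ℝ :=
  z.2 - ∫ s in (0 : ℝ)..t, f s (w s)

/-- The Picard iterate of `w` for `u'' + f(t, u) = 0` with initial data `(u(0), u'(0)) = z`. -/
noncomputable def picard (f : ℝ → ℝ → ℝ) (z : ℝ × ℝ) (w : ℝ → ℝ) (t : ℝ) : ℝ :=
  z.1 + ∫ s in (0 : ℝ)..t, picardSlope f z w s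

namespace IsLipschitzCaratheodory

variable {f : ℝ → ℝ → ℝ} {w w' : ℝ → ℝ}

theorem solvesOn_picard (hf : IsLipschitzCaratheodory f) (z : ℝ × ℝ) (hw : Continuous w) :
    SolvesOn (fun t => f t (w t)) (picard f z w) (picardSlope f z w) univ :=
  solvesOn_primitive (hf.intervalIntegrable_comp w hw) z.1 z.2

theorem continuous_picardSlope (hf : IsLipschitzCaratheodory f) (z : ℝ × ℝ) (hw : Continuous w) :
    Continuous (picardSlope f z w) :=
  continuousOn_univ.mp (hf.solvesOn_picard z hw).continuousOn_slope

theorem picard_sub_picard (hf : IsLipschitzCaratheodory f) (z z' : ℝ × ℝ) (hw : Continuous w)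
    (t : ℝ) : picard f z w t - picard f z' w t = (z.1 - z'.1) + t * (z.2 - z'.2) := by
  have : ∫ s in (0 : ℝ)..t, (picardSlope f z w s - picardSlope f z' w s) = t * (z.2 - z'.2) := by
    simp [picardSlope, mul_sub]
  rw [intervalIntegral.integral_sub ((hf.continuous_picardSlope z hw).intervalIntegrable _ _)
    ((hf.continuous_picardSlope z' hw).intervalIntegrable _ _)] at this
  simp only [picard]
  linarith

variable {L : ℝ → ℝ} {K κ D : ℝ}

theorem abs_picardSlope_sub_le (hf : IsLipschitzCaratheodory f) (hL : HasLipschitzBound f L)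
    (z : ℝ × ℝ) (hw : Continuous w) (hw' : Continuous w') (hκ : 0 ≤ κ) (hD : 0 ≤ D) {t : ℝ}
    (ht : t ∈ Icc 0 K)
    (hdist : ∀ s ∈ Icc 0 t, |w s - w' s| ≤ Real.exp (κ * s) * D) :
    |picardSlope f z w t - picardSlope f z w' t| ≤
      (∫ s in (0 : ℝ)..K, L s) * (Real.exp (κ * t) * D) := by
  have hi := hf.intervalIntegrable_comp w hw 0 t
  have hi' := hf.intervalIntegrable_comp w' hw' 0 t
  calc |picardSlope f z w t - picardSlope f z w' t|
      = |∫ s in (0 : ℝ)..t, (f s (w s) - f s (w' s))| := by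
        rw [intervalIntegral.integral_sub hi hi', picardSlope, picardSlope, sub_sub_sub_cancel_left,
          abs_sub_comm]
    _ ≤ ∫ s in (0 : ℝ)..t, |f s (w s) - f s (w' s)| :=
        intervalIntegral.abs_integral_le_integral_abs ht.1
    _ ≤ ∫ s in (0 : ℝ)..t, L s * (Real.exp (κ * t) * D) := by
        refine intervalIntegral.integral_mono_on ht.1 (hi.sub hi').abs
          ((hL.intervalIntegrable 0 t).mul_const _) fun s hs => (hL.abs_sub_le _ _ _).trans ?_
        refine mul_le_mul_of_nonneg_left ((hdist s hs).trans ?_) (hL.nonneg s)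
        gcongr
        exact hs.2
    _ = (∫ s in (0 : ℝ)..t, L s) * (Real.exp (κ * t) * D) :=
        intervalIntegral.integral_mul_const _ _
    _ ≤ (∫ s in (0 : ℝ)..K, L s) * (Real.exp (κ * t) * D) := by
        gcongr
        exact intervalIntegral.integral_mono_interval le_rfl ht.1 ht.2
          (Eventually.of_forall hL.nonneg) (hL.intervalIntegrable 0 K)

theorem abs_picard_sub_le (hf : IsLipschitzCaratheodory f) (hL : HasLipschitzBound f L)
    (z : ℝ × ℝ) (hw : Continuous w) (hw' : Continuous w') (hκ : 0 < κ) (hD : 0 ≤ D)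
    (hdist : ∀ s ∈ Icc 0 K, |w s - w' s| ≤ Real.exp (κ * s) * D) {t : ℝ} (ht : t ∈ Icc 0 K) :
    |picard f z w t - picard f z w' t| ≤
      (∫ s in (0 : ℝ)..K, L s) / κ * (Real.exp (κ * t) * D) := by
  have hΛ : 0 ≤ ∫ s in (0 : ℝ)..K, L s :=
    intervalIntegral.integral_nonneg (ht.1.trans ht.2) fun s _ => hL.nonneg s
  have hv := hf.continuous_picardSlope z hw
  have hv' := hf.continuous_picardSlope z hw'
  have hexp : ∫ s in (0 : ℝ)..t, Real.exp (κ * s) = (Real.exp (κ * t) - 1) / κ := by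
    rw [intervalIntegral.integral_comp_mul_left (fun x => Real.exp x) hκ.ne']
    simp [div_eq_inv_mul]
  calc |picard f z w t - picard f z w' t|
      = |∫ s in (0 : ℝ)..t, (picardSlope f z w s - picardSlope f z w' s)| := by
        rw [intervalIntegral.integral_sub (hv.intervalIntegrable _ _) (hv'.intervalIntegrable _ _),
          picard, picard, add_sub_add_left_eq_sub]
    _ ≤ ∫ s in (0 : ℝ)..t, |picardSlope f z w s - picardSlope f z w' s| :=
        intervalIntegral.abs_integral_le_integral_abs ht.1
    _ ≤ ∫ s in (0 : ℝ)..t, (∫ s in (0 : ℝ)..K, L s) * (Real.exp (κ * s) * D) :=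
        intervalIntegral.integral_mono_on ht.1 ((hv.sub hv').abs.intervalIntegrable _ _)
          (Continuous.intervalIntegrable (by fun_prop) _ _) fun s hs =>
          hf.abs_picardSlope_sub_le hL z hw hw' hκ.le hD ⟨hs.1, hs.2.trans ht.2⟩
            fun x hx => hdist x ⟨hx.1, hx.2.trans (hs.2.trans ht.2)⟩
    _ = (∫ s in (0 : ℝ)..K, L s) / κ * ((Real.exp (κ * t) - 1) * D) := by
        rw [intervalIntegral.integral_const_mul, intervalIntegral.integral_mul_const, hexp]
        ring
    _ ≤ (∫ s in (0 : ℝ)..K, L s) / κ * (Real.exp (κ * t) * D) := by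
        gcongr
        linarith

end IsLipschitzCaratheodory

/-- The function `exp(κ t) w(t)` with `w` extended by constants beyond `[0, K]`. The sup norm of `w`
is then the Bielecki norm of this function, in which the Picard operator contracts for large `κ`. -/
noncomputable def bieleckiExtend {K : ℝ} (hK : 0 ≤ K) (κ : ℝ) (w : C(Icc 0 K, ℝ)) (t : ℝ) : ℝ :=
  Real.exp (κ * t) * IccExtend hK w t

section Bielecki

variable {K : ℝ} (hK : 0 ≤ K) (κ : ℝ)

theorem continuous_bieleckiExtend (w : C(Icc 0 K, ℝ)) : Continuous (bieleckiExtend hK κ w) := by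
  have : Continuous (IccExtend hK w) := w.continuous.Icc_extend'
  unfold bieleckiExtend
  fun_prop

theorem abs_bieleckiExtend_sub_le (w w' : C(Icc 0 K, ℝ)) (t : ℝ) :
    |bieleckiExtend hK κ w t - bieleckiExtend hK κ w' t| ≤ Real.exp (κ * t) * dist w w' := by
  rw [bieleckiExtend, bieleckiExtend, ← mul_sub, abs_mul, abs_of_pos (Real.exp_pos _),
    ← Real.dist_eq]
  gcongr
  exact ContinuousMap.dist_apply_le_dist _

variable {f : ℝ → ℝ → ℝ}

/-- The Picard operator on `C([0, K])`, conjugated by multiplication by `exp(κ t)`. -/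
noncomputable def picardMap (hf : IsLipschitzCaratheodory f) (z : ℝ × ℝ)
    (w : C(Icc 0 K, ℝ)) : C(Icc 0 K, ℝ) where
  toFun t := Real.exp (-(κ * t)) * picard f z (bieleckiExtend hK κ w) t
  continuous_toFun := by
    have := (hf.solvesOn_picard z (continuous_bieleckiExtend hK κ w)).continuous
    fun_prop

theorem dist_picardMap_picardMap_le (hf : IsLipschitzCaratheodory f) (hκ : 0 ≤ κ) (z z' : ℝ × ℝ)
    (w : C(Icc 0 K, ℝ)) :
    dist (picardMap hK κ hf z w) (picardMap hK κ hf z' w) ≤ (1 + K) * dist z z' := by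
  rw [ContinuousMap.dist_le (by positivity)]
  intro t
  have h₁ : |z.1 - z'.1| ≤ dist z z' := (Real.dist_eq _ _).symm.trans_le (le_max_left _ _)
  have h₂ : |z.2 - z'.2| ≤ dist z z' := (Real.dist_eq _ _).symm.trans_le (le_max_right _ _)
  have hexp : Real.exp (-(κ * t)) ≤ 1 :=
    Real.exp_le_one_iff.mpr (neg_nonpos.mpr (mul_nonneg hκ t.2.1))
  simp only [picardMap, ContinuousMap.coe_mk]
  rw [Real.dist_eq, ← mul_sub, abs_mul, abs_of_pos (Real.exp_pos _),
    hf.picard_sub_picard z z' (continuous_bieleckiExtend hK κ w)]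
  calc Real.exp (-(κ * t)) * |z.1 - z'.1 + t * (z.2 - z'.2)|
      ≤ 1 * (|z.1 - z'.1| + t * |z.2 - z'.2|) := by
        rw [← abs_of_nonneg t.2.1, ← abs_mul, abs_of_nonneg t.2.1]
        gcongr
        exact abs_add_le _ _
    _ ≤ 1 * (dist z z' + K * dist z z') := by
        gcongr
        exact t.2.2
    _ = (1 + K) * dist z z' := by ring

variable {L : ℝ → ℝ}

theorem contractingWith_picardMap (hf : IsLipschitzCaratheodory f) (hL : HasLipschitzBound f L)
    (hκ : 0 < κ) (hLκ : (∫ s in (0 : ℝ)..K, L s) / κ ≤ 1 / 2) (z : ℝ × ℝ) :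
    ContractingWith (1 / 2) (picardMap hK κ hf z) := by
  refine ⟨by norm_num, LipschitzWith.of_dist_le_mul fun w w' => ?_⟩
  rw [ContinuousMap.dist_le (by positivity)]
  intro t
  simp only [picardMap, ContinuousMap.coe_mk]
  rw [Real.dist_eq, ← mul_sub, abs_mul, abs_of_pos (Real.exp_pos _)]
  calc Real.exp (-(κ * t)) * |picard f z (bieleckiExtend hK κ w) t -
          picard f z (bieleckiExtend hK κ w') t|
      ≤ Real.exp (-(κ * t)) *
          ((∫ s in (0 : ℝ)..K, L s) / κ * (Real.exp (κ * t) * dist w w')) := by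
        gcongr
        exact hf.abs_picard_sub_le hL z (continuous_bieleckiExtend hK κ w)
          (continuous_bieleckiExtend hK κ w') hκ dist_nonneg
          (fun s _ => abs_bieleckiExtend_sub_le hK κ w w' s) t.2
    _ = (∫ s in (0 : ℝ)..K, L s) / κ * dist w w' := by
        rw [Real.exp_neg]
        field_simp
    _ ≤ ((1 / 2 : NNReal) : ℝ) * dist w w' := by
        push_cast
        gcongr

theorem lipschitzWith_picardSlope_bieleckiExtend (hf : IsLipschitzCaratheodory f)
    (hL : HasLipschitzBound f L) (hκ : 0 ≤ κ) (z : ℝ × ℝ) :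
    LipschitzWith ((∫ s in (0 : ℝ)..K, L s) * Real.exp (κ * K)).toNNReal
      fun w => picardSlope f z (bieleckiExtend hK κ w) K := by
  refine LipschitzWith.of_dist_le_mul fun w w' => ?_
  rw [Real.coe_toNNReal', Real.dist_eq]
  refine (hf.abs_picardSlope_sub_le hL z (continuous_bieleckiExtend hK κ w)
    (continuous_bieleckiExtend hK κ w') hκ dist_nonneg ⟨hK, le_rfl⟩
    fun s _ => abs_bieleckiExtend_sub_le hK κ w w' s).trans ?_
  rw [← mul_assoc]
  gcongr
  exact le_max_left _ _

theorem bieleckiExtend_eq_picard_of_isFixedPt (hf : IsLipschitzCaratheodory f) {z : ℝ × ℝ}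
    {w : C(Icc 0 K, ℝ)} (hw : Function.IsFixedPt (picardMap hK κ hf z) w) {t : ℝ}
    (ht : t ∈ Icc 0 K) : bieleckiExtend hK κ w t = picard f z (bieleckiExtend hK κ w) t := by
  have : Real.exp (-(κ * t)) * picard f z (bieleckiExtend hK κ w) t = w ⟨t, ht⟩ :=
    DFunLike.congr_fun hw ⟨t, ht⟩
  conv_lhs => rw [bieleckiExtend, IccExtend_of_mem _ _ ht, ← this, Real.exp_neg]
  field_simp

end Bielecki

theorem IsLipschitzCaratheodory.exists_flow {f : ℝ → ℝ → ℝ} (hf : IsLipschitzCaratheodory f)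
    {K : ℝ} (hK : 0 ≤ K) :
    ∃ u v : ℝ × ℝ → ℝ → ℝ,
      (∀ z, SolvesOn (fun t => f t (u z t)) (u z) (v z) (Icc 0 K) ∧ u z 0 = z.1 ∧ v z 0 = z.2) ∧
      (Continuous fun z => u z K) ∧ Continuous fun z => v z K := by
  obtain ⟨L, hL⟩ := hf.exists_lipschitzBound
  have hΛ : 0 ≤ ∫ s in (0 : ℝ)..K, L s := intervalIntegral.integral_nonneg hK fun t _ => hL.nonneg t
  obtain ⟨κ, hκ, hLκ⟩ : ∃ κ : ℝ, 0 < κ ∧ (∫ s in (0 : ℝ)..K, L s) / κ ≤ 1 / 2 :=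
    ⟨2 * (∫ s in (0 : ℝ)..K, L s) + 1, by positivity, by
      rw [div_le_div_iff₀ (by positivity) two_pos]; linarith⟩
  have hcontr (z) := contractingWith_picardMap hK κ hf hL hκ hLκ z
  let w (z : ℝ × ℝ) : C(Icc 0 K, ℝ) := (hcontr z).fixedPoint
  let U (z : ℝ × ℝ) : ℝ → ℝ := bieleckiExtend hK κ (w z)
  have hU (z) : EqOn (U z) (picard f z (U z)) (Icc 0 K) := fun t ht =>
    bieleckiExtend_eq_picard_of_isFixedPt hK κ hf (hcontr z).fixedPoint_isFixedPt ht
  have hw : Continuous w := by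
    refine (LipschitzWith.of_dist_le_mul (K := (2 * (1 + K)).toNNReal) fun z z' => ?_).continuous
    refine ((hcontr z).fixedPoint_lipschitz_in_map (hcontr z') fun y =>
      dist_picardMap_picardMap_le hK κ hf hκ.le z z' y).trans_eq ?_
    rw [Real.coe_toNNReal _ (by positivity)]
    norm_num
    ring
  refine ⟨fun z => picard f z (U z), fun z => picardSlope f z (U z), fun z =>
    ⟨?_, by simp [picard], by simp [picardSlope]⟩, ?_, ?_⟩
  · have hsol := hf.solvesOn_picard z (continuous_bieleckiExtend hK κ (w z))
    exact (hsol.mono (subset_univ _)).congr (hf.intervalIntegrable_comp _ hsol.continuous)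
      fun t ht => congrArg (f t) (hU z ht)
  · have hend (z) : picard f z (U z) K = Real.exp (κ * K) * w z ⟨K, hK, le_rfl⟩ := by
      rw [← hU z ⟨hK, le_rfl⟩]
      simp only [U, bieleckiExtend, IccExtend_of_mem _ _ (right_mem_Icc.mpr hK)]
    simp only [hend]
    exact continuous_const.mul ((continuous_eval_const _).comp hw)
  · have hend (z) : picardSlope f z (U z) K = z.2 + picardSlope f 0 (U z) K := by
      simp [picardSlope, sub_eq_add_neg]
    simp only [hend]
    exact continuous_snd.add ((lipschitzWith_picardSlope_bieleckiExtend hK κ hf hL hκ.le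
      0).continuous.comp hw)

/-! ### Uniqueness and periodic extension -/

namespace SolvesOn

variable {F u v ℓ : ℝ → ℝ}

theorem eqOn_zero_of_integral_lt_one {a b t₀ : ℝ} (h : SolvesOn F u v (Icc a b))
    (hℓ : ∀ a b, IntervalIntegrable ℓ volume a b) (hℓ₀ : ∀ t, 0 ≤ ℓ t)
    (hF : ∀ t, |F t| ≤ ℓ t * |u t|) (hab : b - a ≤ 1) (hsmall : ∫ t in a..b, ℓ t < 1)
    (ht₀ : t₀ ∈ Icc a b) (hu : u t₀ = 0) (hv : v t₀ = 0) : EqOn u 0 (Icc a b) := by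
  have hab₀ : a ≤ b := ht₀.1.trans ht₀.2
  obtain ⟨x, hx, hmax⟩ := isCompact_Icc.exists_isMaxOn ⟨t₀, ht₀⟩ h.continuous.abs.continuousOn
  have hI : 0 ≤ ∫ t in a..b, ℓ t := intervalIntegral.integral_nonneg hab₀ fun t _ => hℓ₀ t
  have hslope (t : ℝ) (ht : t ∈ Icc a b) : ‖v t‖ ≤ (∫ t in a..b, ℓ t) * |u x| := by
    have hsub : uIoc t₀ t ⊆ uIoc a b := by
      rw [uIoc_of_le hab₀]
      exact Ioc_subset_Ioc (le_min ht₀.1 ht.1) (max_le ht₀.2 ht.2)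
    have hbound : ∀ᵐ s ∂volume.restrict (uIoc t₀ t), ‖F s‖ ≤ ℓ s * |u x| :=
      (ae_restrict_iff' measurableSet_uIoc).mpr <| .of_forall fun s hs => (hF s).trans <|
        mul_le_mul_of_nonneg_left
          (hmax (Ioc_subset_Icc_self (uIoc_of_le hab₀ ▸ hsub hs))) (hℓ₀ s)
    rw [h.slope_eq ht₀ ht, hv, zero_sub, norm_neg]
    refine (intervalIntegral.norm_integral_le_abs_of_norm_le hbound
      ((hℓ _ _).mul_const _)).trans ?_
    rw [intervalIntegral.integral_mul_const, abs_mul, abs_abs]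
    refine mul_le_mul_of_nonneg_right ?_ (abs_nonneg _)
    exact (intervalIntegral.abs_integral_mono_interval hsub (.of_forall hℓ₀) (hℓ a b)).trans_eq
      (abs_of_nonneg hI)
  have hmvt := (convex_Icc a b).norm_image_sub_le_of_norm_hasDerivWithin_le
    (fun t _ => (h.hasDerivAt t).hasDerivWithinAt) hslope ht₀ hx
  have hdist : ‖x - t₀‖ ≤ 1 := abs_sub_le_iff.mpr
    ⟨by linarith [hx.2, ht₀.1], by linarith [hx.1, ht₀.2]⟩
  have hux : |u x| ≤ 0 := by
    rw [hu, sub_zero] at hmvt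
    have := mul_le_of_le_one_right (mul_nonneg hI (abs_nonneg (u x))) hdist
    have hle : |u x| ≤ (∫ t in a..b, ℓ t) * |u x| := hmvt.trans this
    nlinarith [abs_nonneg (u x)]
  exact fun t ht => abs_nonpos_iff.mp ((hmax ht).trans hux)

theorem eq_zero_of_abs_le (h : SolvesOn F u v univ) (hℓ : ∀ a b, IntervalIntegrable ℓ volume a b)
    (hℓ₀ : ∀ t, 0 ≤ ℓ t) (hF : ∀ t, |F t| ≤ ℓ t * |u t|) {t₀ : ℝ} (hu : u t₀ = 0)
    (hv : v t₀ = 0) : u = 0 := by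
  have hclosed : IsClosed {t | u t = 0 ∧ v t = 0} :=
    (isClosed_eq h.continuous continuous_const).inter
      (isClosed_eq (continuousOn_univ.mp h.continuousOn_slope) continuous_const)
  have hopen : IsOpen {t | u t = 0 ∧ v t = 0} := by
    rw [isOpen_iff_mem_nhds]
    rintro t ⟨hut, hvt⟩
    have hcont : Continuous fun d : ℝ => ∫ s in (t - d)..(t + d), ℓ s := by
      have hsub (d : ℝ) := intervalIntegral.integral_interval_sub_left (hℓ 0 (t + d)) (hℓ 0 (t - d))
      simp only [← hsub]
      have := intervalIntegral.continuous_primitive hℓ 0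
      fun_prop
    have hnear : ∀ᶠ d in nhdsWithin (0 : ℝ) (Ioi 0), ∫ s in (t - d)..(t + d), ℓ s < 1 :=
      nhdsWithin_le_nhds (hcont.tendsto 0 (gt_mem_nhds (by simp)))
    obtain ⟨d, hd, hd₀, hd₁⟩ :=
      (hnear.and (Ioo_mem_nhdsGT (show (0 : ℝ) < 1 / 2 by norm_num))).exists
    have hzero : EqOn u 0 (Icc (t - d) (t + d)) :=
      (h.mono (subset_univ _)).eqOn_zero_of_integral_lt_one hℓ hℓ₀ hF (by linarith) hd
        ⟨by linarith, by linarith⟩ hut hvt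
    have hnhds : ∀ᶠ x in nhds t, u x = 0 :=
      mem_of_superset (Icc_mem_nhds (by linarith) (by linarith)) hzero
    filter_upwards [hnhds, hnhds.eventually_nhds] with x hx hx'
    exact ⟨hx, (h.hasDerivAt x).unique ((hasDerivAt_const x 0).congr_of_eventuallyEq hx')⟩
  have huniv := IsClopen.eq_univ ⟨hclosed, hopen⟩ ⟨t₀, hu, hv⟩
  funext t
  exact (huniv ▸ mem_univ t : t ∈ {t | u t = 0 ∧ v t = 0}).1

theorem pos_of_nonneg (h : SolvesOn F u v univ) (hℓ : ∀ a b, IntervalIntegrable ℓ volume a b)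
    (hℓ₀ : ∀ t, 0 ≤ ℓ t) (hF : ∀ t, |F t| ≤ ℓ t * |u t|) (hu : ∀ t, 0 ≤ u t) (hne : u ≠ 0)
    (t : ℝ) : 0 < u t := by
  refine (hu t).lt_of_ne' fun ht => hne ?_
  have hmin : IsLocalMin u t := .of_forall fun x => ht.trans_le (hu x)
  exact h.eq_zero_of_abs_le hℓ hℓ₀ hF ht (hmin.hasDerivAt_eq_zero (h.hasDerivAt t))

end SolvesOn

theorem periodic_integral_of_integral_eq_zero {f : ℝ → ℝ} {T : ℝ} (hf : Function.Periodic f T)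
    (hint : ∀ a b, IntervalIntegrable f volume a b) (hmean : ∫ t in (0 : ℝ)..T, f t = 0) :
    Function.Periodic (fun t => ∫ s in (0 : ℝ)..t, f s) T := fun t => by
  simp only [hf.intervalIntegral_add_eq_add 0 t hint, zero_add, hmean, add_zero]

section ToIcoMod

variable {F : ℝ → ℝ} {K : ℝ} (hK : 0 < K)

theorem eqOn_comp_toIcoMod : EqOn (fun t => F (toIcoMod hK 0 t)) F (Ico 0 K) := fun t ht =>
  congrArg F ((toIcoMod_eq_self hK).mpr (by rwa [zero_add]))

theorem periodic_comp_toIcoMod : Function.Periodic (fun t => F (toIcoMod hK 0 t)) K := fun t =>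
  congrArg F (toIcoMod_add_right hK 0 t)

theorem intervalIntegrable_comp_toIcoMod (hF : IntervalIntegrable F volume 0 K) (a b : ℝ) :
    IntervalIntegrable (fun t => F (toIcoMod hK 0 t)) volume a b := by
  refine (periodic_comp_toIcoMod hK).intervalIntegrable hK.ne' (t := 0) ?_ a b
  rw [zero_add]
  refine hF.congr_uIoo fun t ht => (eqOn_comp_toIcoMod hK (Ioo_subset_Ico_self ?_)).symm
  rwa [uIoo_of_le hK.le] at ht

theorem integral_comp_toIcoMod {t : ℝ} (ht : t ∈ Icc 0 K) :
    ∫ s in (0 : ℝ)..t, F (toIcoMod hK 0 s) = ∫ s in (0 : ℝ)..t, F s :=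
  intervalIntegral.integral_congr_Ioo_of_le ht.1 fun _ hs =>
    eqOn_comp_toIcoMod hK ⟨hs.1.le, hs.2.trans_le ht.2⟩

end ToIcoMod

theorem SolvesOn.exists_periodic_extension {F u v : ℝ → ℝ} {K : ℝ} (hK : 0 < K)
    (h : SolvesOn F u v (Icc 0 K)) (hu : u K = u 0) (hv : v K = v 0) :
    ∃ U V : ℝ → ℝ, Function.Periodic U K ∧ EqOn U u (Icc 0 K) ∧
      SolvesOn (fun t => F (toIcoMod hK 0 t)) U V univ := by
  have h₀ : (0 : ℝ) ∈ Icc 0 K := left_mem_Icc.mpr hK.le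
  have hK' : K ∈ Icc 0 K := right_mem_Icc.mpr hK.le
  have hint := intervalIntegrable_comp_toIcoMod hK (h.intervalIntegrable 0 K)
  set V : ℝ → ℝ := fun t => v 0 - ∫ s in (0 : ℝ)..t, F (toIcoMod hK 0 s) with hV
  have hsol := solvesOn_primitive hint (u 0) (v 0)
  have hVv : EqOn V v (Icc 0 K) := fun t ht => by
    simp only [hV, integral_comp_toIcoMod hK ht, h.slope_eq h₀ ht]
  have hVint : ∀ a b, IntervalIntegrable V volume a b :=
    (continuousOn_univ.mp hsol.continuousOn_slope).intervalIntegrable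
  have hVu (t : ℝ) (ht : t ∈ Icc 0 K) : ∫ s in (0 : ℝ)..t, V s = u t - u 0 :=
    intervalIntegral.integral_eq_sub_of_hasDerivAt
      (fun x hx => hVv (uIcc_subset_Icc h₀ ht hx) ▸ h.hasDerivAt x) (hVint 0 t)
  have hVper : Function.Periodic V K := fun t => by
    have := periodic_integral_of_integral_eq_zero (periodic_comp_toIcoMod hK) hint
      (by rw [integral_comp_toIcoMod hK hK']; linarith [h.slope_eq h₀ hK']) t
    simp only [hV, this]
  refine ⟨_, V, fun t => ?_, fun t ht => ?_, hsol⟩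
  · have := periodic_integral_of_integral_eq_zero hVper hVint (by rw [hVu K hK']; linarith) t
    simp only at this
    rw [this]
  · rw [hVu t ht]
    ring

/-! ### A priori bounds on an interval of concavity -/

namespace SolvesOn

variable {F u v : ℝ → ℝ} {s e : ℝ}

theorem slope_mul_le_sub (h : SolvesOn F u v (Icc s e)) (hF : ∀ t ∈ Ioo s e, 0 ≤ F t) {x y : ℝ}
    (hsx : s ≤ x) (hxy : x ≤ y) (hye : y ≤ e) : v y * (y - x) ≤ u y - u x :=
  mul_sub_le_sub_of_forall_le_deriv h.hasDerivAt hxy fun _ ht =>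
    h.antitoneOn_slope hF ⟨hsx.trans ht.1.le, ht.2.le.trans hye⟩ ⟨hsx.trans hxy, hye⟩ ht.2.le

theorem sub_le_slope_mul (h : SolvesOn F u v (Icc s e)) (hF : ∀ t ∈ Ioo s e, 0 ≤ F t) {x y : ℝ}
    (hsx : s ≤ x) (hxy : x ≤ y) (hye : y ≤ e) : u y - u x ≤ v x * (y - x) :=
  sub_le_mul_sub_of_forall_deriv_le h.hasDerivAt hxy fun _ ht =>
    h.antitoneOn_slope hF ⟨hsx, hxy.trans hye⟩ ⟨hsx.trans ht.1.le, ht.2.le.trans hye⟩ ht.1.le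

theorem concaveOn (h : SolvesOn F u v (Icc s e)) (hF : ∀ t ∈ Ioo s e, 0 ≤ F t) :
    ConcaveOn ℝ (Icc s e) u := by
  refine AntitoneOn.concaveOn_of_deriv (convex_Icc s e) h.continuous.continuousOn
    (fun t _ => (h.hasDerivAt t).differentiableAt.differentiableWithinAt) ?_
  rw [funext fun t => (h.hasDerivAt t).deriv]
  exact (h.antitoneOn_slope hF).mono interior_subset

theorem integral_mul_le_two_mul (h : SolvesOn F u v (Icc s e)) (hF : ∀ t ∈ Ioo s e, 0 ≤ F t)
    {ε ρ : ℝ} (hε : 0 ≤ ε) (hse : s + ε ≤ e - ε) (hu : ∀ t ∈ Icc s e, 0 ≤ u t)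
    (huρ : ∀ t ∈ Icc s e, u t ≤ ρ) : (∫ t in (s + ε)..(e - ε), F t) * ε ≤ 2 * ρ := by
  have hl : s + ε ∈ Icc s e := ⟨by linarith, by linarith⟩
  have hr : e - ε ∈ Icc s e := ⟨by linarith, by linarith⟩
  have hdrop := h.slope_sub _ hl _ hr
  have hleft : v (s + ε) * ε ≤ ρ := by
    have := h.slope_mul_le_sub hF le_rfl hl.1 hl.2
    linarith [huρ _ hl, hu s ⟨le_rfl, by linarith⟩]
  have hright : -ρ ≤ v (e - ε) * ε := by
    have := h.sub_le_slope_mul hF hr.1 hr.2 le_rfl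
    linarith [huρ _ hr, hu e ⟨by linarith, le_rfl⟩]
  have : ∫ t in (s + ε)..(e - ε), F t = v (s + ε) - v (e - ε) := by linarith
  rw [this]
  linarith

end SolvesOn

theorem mul_le_mul_of_concaveOn_of_nonneg {u : ℝ → ℝ} {s e ε m t : ℝ}
    (hu : ConcaveOn ℝ (Icc s e) u) (hu₀ : ∀ t ∈ Icc s e, 0 ≤ u t) (hε : 0 < ε)
    (hm : m ∈ Icc s e) (ht : t ∈ Icc (s + ε) (e - ε)) : ε * u m ≤ (e - s) * u t := by
  have ht' : t ∈ Icc s e := ⟨by linarith [ht.1], by linarith [ht.2]⟩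
  have hut := hu₀ t ht'
  have hum := hu₀ m hm
  rcases lt_trichotomy t m with htm | rfl | hmt
  · have hslope := hu.slope_anti_adjacent (left_mem_Icc.mpr (ht'.1.trans ht'.2)) hm
      (by linarith [ht.1]) htm
    have hus := hu₀ s (left_mem_Icc.mpr (ht'.1.trans ht'.2))
    rw [div_le_div_iff₀ (by linarith) (by linarith [ht.1])] at hslope
    nlinarith [ht.1, hm.2]
  · exact mul_le_mul_of_nonneg_right (by linarith [ht.1, ht.2]) hut
  · have hslope := hu.slope_anti_adjacent hm (right_mem_Icc.mpr (ht'.1.trans ht'.2)) hmt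
      (by linarith [ht.2])
    have hue := hu₀ e (right_mem_Icc.mpr (ht'.1.trans ht'.2))
    rw [div_le_div_iff₀ (by linarith [ht.2]) (by linarith)] at hslope
    nlinarith [ht.2, hm.1]

section AprioriBound

variable {p h u v : ℝ → ℝ} {σ : ℝ}

theorem SolvesOn.le_of_superlinear (hu : SolvesOn (fun t => p t * h (u t)) u v (Icc 0 σ))
    (hp : ∀ a b, IntervalIntegrable p volume a b) (hp₀ : ∀ t, 0 ≤ p t)
    (hu₀ : ∀ t ∈ Icc 0 σ, 0 ≤ u t) (hh : ∀ s, 0 ≤ s → 0 ≤ h s) {ε S M : ℝ} (hε : 0 < ε)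
    (hεσ : ε ≤ σ - ε) (hS : 0 < S) (hM : 0 ≤ M) (hhM : ∀ s, S ≤ s → M * s ≤ h s)
    (hlarge : 2 * σ < M * (∫ t in ε..(σ - ε), p t) * ε ^ 2) :
    ∀ t ∈ Icc 0 σ, u t ≤ S * σ / ε := by
  have hσ : 0 < σ := by linarith
  have hF (t : ℝ) (ht : t ∈ Ioo 0 σ) : 0 ≤ p t * h (u t) :=
    mul_nonneg (hp₀ t) (hh _ (hu₀ t (Ioo_subset_Icc_self ht)))
  obtain ⟨m, hm, hmax⟩ :=
    isCompact_Icc.exists_isMaxOn (nonempty_Icc.mpr hσ.le) hu.continuous.continuousOn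
  refine fun t ht => (hmax ht).trans (le_of_not_gt fun hlt => ?_)
  rw [div_lt_iff₀ hε] at hlt
  have hum : 0 < u m := pos_of_mul_pos_left ((mul_pos hS hσ).trans hlt) hε.le
  have hlow (t : ℝ) (ht : t ∈ Icc ε (σ - ε)) : u m * ε / σ ≤ u t := by
    rw [div_le_iff₀ hσ]
    have := mul_le_mul_of_concaveOn_of_nonneg (hu.concaveOn hF) hu₀ hε hm (t := t)
      (by rwa [zero_add])
    linarith
  have hSm : S ≤ u m * ε / σ := by rw [le_div_iff₀ hσ]; exact hlt.le
  have hmass : M * (u m * ε / σ) * (∫ t in ε..(σ - ε), p t) ≤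
      ∫ t in ε..(σ - ε), p t * h (u t) := by
    rw [← intervalIntegral.integral_const_mul]
    refine intervalIntegral.integral_mono_on hεσ ((hp _ _).const_mul _)
      (hu.intervalIntegrable _ _) fun t ht => ?_
    rw [mul_comm]
    exact mul_le_mul_of_nonneg_left ((mul_le_mul_of_nonneg_left (hlow t ht) hM).trans
      (hhM _ (hSm.trans (hlow t ht)))) (hp₀ t)
  have hle : u m * (M * (∫ t in ε..(σ - ε), p t) * ε ^ 2) / σ ≤ 2 * u m := calc
    _ = M * (u m * ε / σ) * (∫ t in ε..(σ - ε), p t) * ε := by ring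
    _ ≤ (∫ t in ε..(σ - ε), p t * h (u t)) * ε := mul_le_mul_of_nonneg_right hmass hε.le
    _ ≤ 2 * u m := by
      have := hu.integral_mul_le_two_mul hF hε.le (by linarith) hu₀ (fun t ht => hmax ht)
      rwa [zero_add] at this
  rw [div_le_iff₀ hσ] at hle
  nlinarith

theorem SolvesOn.slope_bounds_of_le (hu : SolvesOn (fun t => p t * h (u t)) u v (Icc 0 σ))
    (hσ : 0 < σ) (hp : ∀ a b, IntervalIntegrable p volume a b) (hp₀ : ∀ t, 0 ≤ p t)
    (hu₀ : ∀ t ∈ Icc 0 σ, 0 ≤ u t) (hh : ∀ s, 0 ≤ s → 0 ≤ h s) {R H : ℝ}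
    (huR : ∀ t ∈ Icc 0 σ, u t ≤ R) (hH : ∀ s ∈ Icc 0 R, h s ≤ H) :
    v 0 ≤ R / σ + H * (∫ t in 0..σ, p t) ∧ -(R / σ + H * (∫ t in 0..σ, p t)) ≤ v σ := by
  have h₀ : (0 : ℝ) ∈ Icc 0 σ := ⟨le_rfl, hσ.le⟩
  have h₁ : σ ∈ Icc 0 σ := ⟨hσ.le, le_rfl⟩
  have hF (t : ℝ) (ht : t ∈ Ioo 0 σ) : 0 ≤ p t * h (u t) :=
    mul_nonneg (hp₀ t) (hh _ (hu₀ t (Ioo_subset_Icc_self ht)))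
  have hdrop : v 0 - H * (∫ t in 0..σ, p t) ≤ v σ := by
    rw [← intervalIntegral.integral_const_mul]
    refine hu.sub_integral_le_slope hσ.le h₀ h₁ ((hp _ _).const_mul _) fun t ht => ?_
    have ht' := Ioo_subset_Icc_self ht
    rw [mul_comm]
    exact mul_le_mul_of_nonneg_right (hH _ ⟨hu₀ t ht', huR t ht'⟩) (hp₀ t)
  have hleft := hu.sub_le_slope_mul hF le_rfl hσ.le le_rfl
  have hright := hu.slope_mul_le_sub hF le_rfl hσ.le le_rfl
  have hvσ : v σ ≤ R / σ := by
    rw [le_div_iff₀ hσ]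
    linarith [huR σ h₁, hu₀ 0 h₀]
  have hv0 : -(R / σ) ≤ v 0 := by
    rw [← neg_div, div_le_iff₀ hσ]
    linarith [huR 0 h₀, hu₀ σ h₁]
  constructor <;> linarith

/-- Every nonnegative solution of `u'' + p h(u) = 0` on `[0, σ]`, whatever its boundary values, is
at most `R`, enters with slope at most `C` and leaves with slope at least `-C`. -/
def AprioriBound (p h : ℝ → ℝ) (σ R C : ℝ) : Prop :=
  ∀ u v, SolvesOn (fun t => p t * h (u t)) u v (Icc 0 σ) → (∀ t ∈ Icc 0 σ, 0 ≤ u t) →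
    (∀ t ∈ Icc 0 σ, u t ≤ R) ∧ v 0 ≤ C ∧ -C ≤ v σ

/-- The nonlinearity `g` up to `R`, continued with slope `M` beyond `R`: a superlinear `g` becomes
globally Lipschitz. -/
def linearExtension (g : ℝ → ℝ) (R M s : ℝ) : ℝ :=
  g (min s R) + M * max (s - R) 0

theorem linearExtension_of_le (g : ℝ → ℝ) {R s : ℝ} (M : ℝ) (hs : s ≤ R) :
    linearExtension g R M s = g s := by
  rw [linearExtension, min_eq_left hs, max_eq_right (by linarith), mul_zero, add_zero]

theorem mul_le_linearExtension {g : ℝ → ℝ} {S R M : ℝ} (hg : ∀ s, S ≤ s → M * s ≤ g s)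
    (hSR : S ≤ R) {s : ℝ} (hs : S ≤ s) : M * s ≤ linearExtension g R M s := by
  have := hg _ (le_min hs hSR)
  rw [linearExtension]
  rcases le_total s R with h | h
  · rw [min_eq_left h] at this ⊢
    rwa [max_eq_right (by linarith), mul_zero, add_zero]
  · rw [min_eq_right h] at this ⊢
    rw [max_eq_left (by linarith)]
    linarith

theorem linearExtension_nonneg {g : ℝ → ℝ} {R M : ℝ} (hg : ∀ s, 0 ≤ g s) (hM : 0 ≤ M) (s : ℝ) :
    0 ≤ linearExtension g R M s :=
  add_nonneg (hg _) (mul_nonneg hM (le_max_right _ _))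

theorem abs_linearExtension_sub_le {g : ℝ → ℝ} {R M : ℝ} {L : NNReal}
    (hg : LipschitzOnWith L g (Iic R)) (hM : 0 ≤ M) (s t : ℝ) :
    |linearExtension g R M s - linearExtension g R M t| ≤ (L + M) * |s - t| := by
  have hmin : |g (min s R) - g (min t R)| ≤ L * |s - t| := by
    have := hg.dist_le_mul _ (min_le_right s R) _ (min_le_right t R)
    rw [Real.dist_eq, Real.dist_eq] at this
    exact this.trans (mul_le_mul_of_nonneg_left
      (by simpa using abs_min_sub_min_le_max s R t R) L.coe_nonneg)
  have hmax : |M * max (s - R) 0 - M * max (t - R) 0| ≤ M * |s - t| := by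
    rw [← mul_sub, abs_mul, abs_of_nonneg hM]
    exact mul_le_mul_of_nonneg_left
      (by simpa using abs_max_sub_max_le_max (s - R) 0 (t - R) 0) hM
  rw [linearExtension, linearExtension, add_sub_add_comm, add_mul]
  exact (abs_add_le _ _).trans (add_le_add hmin hmax)

theorem continuous_linearExtension {g : ℝ → ℝ} (hg : Continuous g) (R M : ℝ) :
    Continuous (linearExtension g R M) := by
  unfold linearExtension
  fun_prop

theorem exists_integral_Icc_add_sub_pos (hp : ∀ a b, IntervalIntegrable p volume a b)
    (hσ : 0 < σ) (hpos : 0 < ∫ t in 0..σ, p t) :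
    ∃ ε, 0 < ε ∧ ε ≤ σ - ε ∧ 0 < ∫ t in ε..(σ - ε), p t := by
  have hcont : Continuous fun ε : ℝ => ∫ t in ε..(σ - ε), p t := by
    have hsub (ε : ℝ) := intervalIntegral.integral_interval_sub_left (hp 0 (σ - ε)) (hp 0 ε)
    simp only [← hsub]
    have := intervalIntegral.continuous_primitive hp 0
    fun_prop
  have hnear : ∀ᶠ ε in nhdsWithin (0 : ℝ) (Ioi 0), 0 < ∫ t in ε..(σ - ε), p t :=
    nhdsWithin_le_nhds (hcont.tendsto 0 (lt_mem_nhds (by simpa)))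
  obtain ⟨ε, hε, hε₀, hε₁⟩ := (hnear.and (Ioo_mem_nhdsGT (half_pos hσ))).exists
  exact ⟨ε, hε₀, by linarith, hε⟩

theorem exists_aprioriBound_linearExtension {g : ℝ → ℝ}
    (hp : ∀ a b, IntervalIntegrable p volume a b) (hp₀ : ∀ t, 0 ≤ p t) (hσ : 0 < σ)
    (hpos : 0 < ∫ t in 0..σ, p t) (hg : Continuous g) (hg₀ : ∀ s, 0 ≤ g s)
    (hsup : Tendsto (fun s => g s / s) atTop atTop) (ρ : ℝ) :
    ∃ R C M, ρ ≤ R ∧ 0 < C ∧ 0 < M ∧ AprioriBound p (linearExtension g R M) σ R C := by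
  obtain ⟨ε, hε, hεσ, hA⟩ := exists_integral_Icc_add_sub_pos hp hσ hpos
  set A := ∫ t in ε..(σ - ε), p t
  obtain ⟨M, hM₀, hM⟩ : ∃ M, 0 < M ∧ 2 * σ < M * A * ε ^ 2 := by
    refine ⟨(2 * σ + 1) / (A * ε ^ 2), by positivity, ?_⟩
    rw [mul_assoc, div_mul_cancel₀ _ (by positivity)]
    linarith
  obtain ⟨S, hS₀, hS⟩ : ∃ S, 0 < S ∧ ∀ s, S ≤ s → M * s ≤ g s := by
    obtain ⟨S, hS⟩ := eventually_atTop.mp (hsup.eventually_ge_atTop M)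
    refine ⟨max S 1, by positivity, fun s hs => ?_⟩
    have hs₀ : 0 < s := one_pos.trans_le ((le_max_right _ _).trans hs)
    exact (le_div_iff₀ hs₀).mp (hS s ((le_max_left _ _).trans hs))
  set R := max ρ (S * σ / ε)
  have hSR : S ≤ R := by
    refine le_trans ?_ (le_max_right _ _)
    rw [le_div_iff₀ hε]
    exact mul_le_mul_of_nonneg_left (by linarith) hS₀.le
  have hh (s : ℝ) (_ : 0 ≤ s) : 0 ≤ linearExtension g R M s := linearExtension_nonneg hg₀ hM₀.le s
  obtain ⟨H, hH⟩ := (isCompact_Icc (a := 0) (b := R)).bddAbove_image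
    (continuous_linearExtension hg R M).continuousOn
  have hH' (s : ℝ) (hs : s ∈ Icc 0 R) : linearExtension g R M s ≤ H := hH (mem_image_of_mem _ hs)
  have hR₀ : 0 < R := hS₀.trans_le hSR
  have hH₀ : 0 ≤ H := (hh 0 le_rfl).trans (hH' 0 ⟨le_rfl, hR₀.le⟩)
  refine ⟨R, R / σ + H * (∫ t in 0..σ, p t), M, le_max_left _ _, by positivity, hM₀,
    fun u v hu hu₀ => ?_⟩
  have huR (t : ℝ) (ht : t ∈ Icc 0 σ) : u t ≤ R :=
    (hu.le_of_superlinear hp hp₀ hu₀ hh hε hεσ hS₀ hM₀.le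
      (fun s hs => mul_le_linearExtension hS hSR hs) hM t ht).trans (le_max_right _ _)
  exact ⟨huR, hu.slope_bounds_of_le hσ hp hp₀ hu₀ hh huR hH'⟩

end AprioriBound

/-! ### Periodic weights and barriers -/

/-- A nonnegative, locally integrable, `T`-periodic coefficient. -/
structure IsWeight (q : ℝ → ℝ) (T : ℝ) : Prop where
  periodic : Function.Periodic q T
  nonneg : ∀ t, 0 ≤ q t
  intervalIntegrable : ∀ a b, IntervalIntegrable q volume a b

namespace IsWeight

variable {q : ℝ → ℝ} {T a b c d : ℝ}

theorem comp_neg (hq : IsWeight q T) : IsWeight (fun t => q (-t)) T where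
  periodic t := by simp only [neg_add, ← sub_eq_add_neg, hq.periodic.sub_eq]
  nonneg t := hq.nonneg (-t)
  intervalIntegrable a b := by simpa using (hq.intervalIntegrable (-a) (-b)).comp_sub_left 0

theorem comp_add_right (hq : IsWeight q T) (c : ℝ) : IsWeight (fun t => q (t + c)) T where
  periodic := hq.periodic.add_const c
  nonneg t := hq.nonneg (t + c)
  intervalIntegrable a b := by
    simpa using (hq.intervalIntegrable (a + c) (b + c)).comp_add_right c

theorem integral_nonneg (hq : IsWeight q T) (hab : a ≤ b) : 0 ≤ ∫ t in a..b, q t :=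
  intervalIntegral.integral_nonneg hab fun t _ => hq.nonneg t

theorem integral_mono (hq : IsWeight q T) (hca : c ≤ a) (hab : a ≤ b) (hbd : b ≤ d) :
    ∫ t in a..b, q t ≤ ∫ t in c..d, q t :=
  intervalIntegral.integral_mono_interval hca hab hbd (.of_forall hq.nonneg)
    (hq.intervalIntegrable c d)

theorem integral_le_integral_period (hq : IsWeight q T) (hab : a ≤ b) (hT : b - a ≤ T) :
    ∫ t in a..b, q t ≤ ∫ t in 0..T, q t := by
  have := hq.integral_mono le_rfl hab (d := a + T) (by linarith)
  rwa [hq.periodic.intervalIntegral_add_eq a 0, zero_add] at this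

end IsWeight

theorem abs_le_mul_of_periodic_of_abs_deriv_le {u v : ℝ → ℝ} {T A : ℝ} (hT : 0 < T)
    (hu : Function.Periodic u T) (hd : ∀ t, HasDerivAt u (v t) t) (hv : ∀ t, |v t| ≤ A) (t : ℝ) :
    |u t - u 0| ≤ A * T := by
  obtain ⟨y, hy, hty⟩ := hu.exists_mem_Ico₀ hT t
  have hlow := mul_sub_le_sub_of_forall_le_deriv hd hy.1 fun x _ => (abs_le.mp (hv x)).1
  have hupp := sub_le_mul_sub_of_forall_deriv_le hd hy.1 fun x _ => (abs_le.mp (hv x)).2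
  have hA : A * (y - 0) ≤ A * T :=
    mul_le_mul_of_nonneg_left (by linarith [hy.2]) ((abs_nonneg _).trans (hv 0))
  rw [hty, abs_le]
  constructor <;> linarith

theorem exists_periodic_solvesOn_of_integral_eq_zero {w : ℝ → ℝ} {T A : ℝ} (hT : 0 < T)
    (hw : Function.Periodic w T) (hint : ∀ a b, IntervalIntegrable w volume a b)
    (hmean : ∫ t in 0..T, w t = 0) (hA : ∀ t ∈ Icc 0 T, |∫ s in 0..t, w s| ≤ A) (x : ℝ) :
    ∃ u v : ℝ → ℝ, SolvesOn w u v univ ∧ Function.Periodic u T ∧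
      (∀ t, |u t - x| ≤ 2 * A * T) ∧ ∀ t, |v t| ≤ 2 * A := by
  set W : ℝ → ℝ := fun t => ∫ s in 0..t, w s
  have hWper : Function.Periodic W T := periodic_integral_of_integral_eq_zero hw hint hmean
  have hWcont : Continuous W := intervalIntegral.continuous_primitive hint 0
  have hWA (t : ℝ) : |W t| ≤ A := by
    obtain ⟨y, hy, hty⟩ := hWper.exists_mem_Ico₀ hT t
    rw [hty]
    exact hA y (Ico_subset_Icc_self hy)
  set y := (∫ t in 0..T, W t) / T with hy
  have hyA : |y| ≤ A := by
    have := intervalIntegral.norm_integral_le_of_norm_le_const (f := W) (C := A) (a := 0) (b := T)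
      fun t _ => hWA t
    rw [hy, abs_div, abs_of_pos hT, div_le_iff₀ hT]
    simpa [abs_of_pos hT] using this
  have hvA (t : ℝ) : |y - W t| ≤ 2 * A := (abs_sub y (W t)).trans (by linarith [hWA t])
  have hsol := solvesOn_primitive hint x y
  have hper := periodic_integral_of_integral_eq_zero (T := T) (f := fun t => y - W t)
    (fun t => by simp only [hWper t]) (continuous_const.sub hWcont).intervalIntegrable
    (by
      rw [intervalIntegral.integral_sub intervalIntegrable_const (hWcont.intervalIntegrable _ _),
        intervalIntegral.integral_const, smul_eq_mul, sub_zero, hy, mul_div_cancel₀ _ hT.ne',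
        sub_self])
  have huper : Function.Periodic (fun t => x + ∫ s in 0..t, (y - W s)) T := fun t =>
    congrArg (x + ·) (hper t)
  refine ⟨_, _, hsol, huper, fun t => ?_, hvA⟩
  have := abs_le_mul_of_periodic_of_abs_deriv_le hT huper hsol.hasDerivAt hvA t
  simpa using this

/-- `β` is a `T`-periodic solution of `β'' + Γ p - lam n = 0` with values in `[r / 2, r]`; the last
two fields say that neither the slope of `β` nor the impulse of `Γ p` over a period exceeds `r / T`.
It serves as an upper solution of `u'' + (p - μ n) g(u) = 0` on the levels where `g ≤ Γ` and
`lam ≤ μ g`. -/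
structure IsBarrier (p n β β' : ℝ → ℝ) (T Γ lam r : ℝ) : Prop where
  solvesOn : SolvesOn (fun t => Γ * p t - lam * n t) β β' univ
  periodic : Function.Periodic β T
  half_le : ∀ t, r / 2 ≤ β t
  le : ∀ t, β t ≤ r
  abs_slope_le : ∀ t, |β' t| ≤ r / T
  mul_integral_le : ∀ a b, a ≤ b → b - a ≤ T → Γ * ∫ t in a..b, p t ≤ r / T

theorem IsBarrier.comp_neg {p n β β' : ℝ → ℝ} {T Γ lam r : ℝ} (h : IsBarrier p n β β' T Γ lam r) :
    IsBarrier (fun t => p (-t)) (fun t => n (-t)) (fun t => β (-t)) (fun t => -β' (-t)) T Γ lam r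
    where
  solvesOn := by simpa only [zero_sub, preimage_univ] using h.solvesOn.reflect 0
  periodic t := by simp only [neg_add, ← sub_eq_add_neg, h.periodic.sub_eq]
  half_le t := h.half_le (-t)
  le t := h.le (-t)
  abs_slope_le t := by simpa only [abs_neg] using h.abs_slope_le (-t)
  mul_integral_le a b hab hT := by
    rw [intervalIntegral.integral_comp_neg]
    exact h.mul_integral_le _ _ (by linarith) (by linarith)

theorem exists_isBarrier {p n : ℝ → ℝ} {T Γ r : ℝ} (hT : 0 < T) (hp : IsWeight p T)
    (hn : IsWeight n T) (hnpos : 0 < ∫ t in 0..T, n t) (hΓ : 0 ≤ Γ)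
    (hΓr : Γ * ∫ t in 0..T, p t ≤ r / T / 8) :
    ∃ lam β β', IsBarrier p n β β' T Γ lam r := by
  set P := ∫ t in 0..T, p t
  set N := ∫ t in 0..T, n t
  have hP : 0 ≤ P := hp.integral_nonneg hT.le
  have hΓP : 0 ≤ Γ * P := mul_nonneg hΓ hP
  obtain ⟨lam, hlam₀, hlam⟩ : ∃ lam, 0 ≤ lam ∧ lam * N = Γ * P :=
    ⟨Γ * P / N, by positivity, div_mul_cancel₀ _ hnpos.ne'⟩
  have hpi (a b : ℝ) := (hp.intervalIntegrable a b).const_mul Γ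
  have hni (a b : ℝ) := (hn.intervalIntegrable a b).const_mul lam
  have hW (t : ℝ) : ∫ s in 0..t, (Γ * p s - lam * n s) =
      Γ * (∫ s in 0..t, p s) - lam * ∫ s in 0..t, n s := by
    rw [intervalIntegral.integral_sub (hpi 0 t) (hni 0 t),
      intervalIntegral.integral_const_mul, intervalIntegral.integral_const_mul]
  have hWA (t : ℝ) (ht : t ∈ Icc 0 T) : |∫ s in 0..t, (Γ * p s - lam * n s)| ≤ Γ * P := by
    rw [hW]
    exact abs_sub_le_of_nonneg_of_le
      (mul_nonneg hΓ (hp.integral_nonneg ht.1))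
      (mul_le_mul_of_nonneg_left (hp.integral_mono le_rfl ht.1 ht.2) hΓ)
      (mul_nonneg hlam₀ (hn.integral_nonneg ht.1))
      (hlam ▸ mul_le_mul_of_nonneg_left (hn.integral_mono le_rfl ht.1 ht.2) hlam₀)
  obtain ⟨β, β', hsol, hper, hβ, hβ'⟩ := exists_periodic_solvesOn_of_integral_eq_zero hT
    (fun t => by simp only [hp.periodic t, hn.periodic t]) (fun a b => (hpi a b).sub (hni a b))
    (by rw [hW, hlam, sub_self]) hWA (3 * r / 4)
  have hsmall : 2 * (Γ * P) * T ≤ r / 4 := by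
    rw [div_div, le_div_iff₀ (by positivity)] at hΓr
    linarith
  refine ⟨lam, β, β', hsol, hper, fun t => ?_, fun t => ?_, fun t => ?_, fun a b hab hab' => ?_⟩
  · linarith [(abs_le.mp (hβ t)).1]
  · linarith [(abs_le.mp (hβ t)).2]
  · linarith [hβ' t]
  · linarith [mul_le_mul_of_nonneg_left (hp.integral_le_integral_period hab hab') hΓ]

/-! ### Escape above the barrier -/

/-- On `(s, e)` the force `F` is at most `Γ p`, and at most `Γ p - κ n` wherever `u ≥ r / 4`: a
solution of `u'' + F = 0` is strongly convex on the support of `n` as long as it is not small. -/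
structure IsPushedUp (p n : ℝ → ℝ) (Γ κ r : ℝ) (F u : ℝ → ℝ) (s e : ℝ) : Prop where
  le : ∀ t ∈ Ioo s e, F t ≤ Γ * p t
  le_of_quarter_le : ∀ t ∈ Ioo s e, r / 4 ≤ u t → F t ≤ Γ * p t - κ * n t

section Escape

variable {p n β β' F u v : ℝ → ℝ} {T Γ lam κ r s e C : ℝ}

theorem IsPushedUp.mono (h : IsPushedUp p n Γ κ r F u s e) {s' : ℝ} (hs : s ≤ s') :
    IsPushedUp p n Γ κ r F u s' e :=
  ⟨fun t ht => h.le t ⟨hs.trans_lt ht.1, ht.2⟩,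
    fun t ht => h.le_of_quarter_le t ⟨hs.trans_lt ht.1, ht.2⟩⟩

theorem IsPushedUp.sub_barrier_nonpos (h : IsPushedUp p n Γ κ r F u s e)
    (hβ : IsBarrier p n β β' T Γ lam r) (hr : 0 ≤ r) (hn : ∀ t, 0 ≤ n t) (hκ : lam ≤ κ) :
    ∀ t ∈ Ioo s e, 0 ≤ (u - β) t → (F - fun t => Γ * p t - lam * n t) t ≤ 0 := by
  intro t ht hut
  simp only [Pi.sub_apply] at hut ⊢
  have := h.le_of_quarter_le t ht (by linarith [hβ.half_le t])
  linarith [mul_le_mul_of_nonneg_right hκ (hn t)]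

theorem SolvesOn.barrier_lt_of_slope (hu : SolvesOn F u v (Icc s e))
    (hF : IsPushedUp p n Γ κ r F u s e) (hβ : IsBarrier p n β β' T Γ lam r) (hr : 0 ≤ r)
    (hn : ∀ t, 0 ≤ n t) (hκ : lam ≤ κ) (hse : s ≤ e) (hus : r < u s) (hvs : r / T < v s) :
    β e < u e ∧ v s - 2 * (r / T) ≤ v e := by
  have hw := hu.sub (hβ.solvesOn.mono (subset_univ (Icc s e)))
  have hneg := hF.sub_barrier_nonpos hβ hr hn hκ
  have hws : 0 < (u - β) s := sub_pos.mpr ((hβ.le s).trans_lt hus)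
  have hws' : 0 < (v - β') s := sub_pos.mpr ((le_abs_self _).trans_lt
    ((hβ.abs_slope_le s).trans_lt hvs))
  have hgrow := hw.mul_sub_le_sub_of_slope_pos hneg hws.le hws' ⟨hse, le_rfl⟩
  have hslope := hw.slope_le_slope_of_slope_pos hneg hws.le hws' ⟨hse, le_rfl⟩
  have hgrow₀ := mul_nonneg hws'.le (sub_nonneg.mpr hse)
  simp only [Pi.sub_apply] at *
  exact ⟨by linarith, by linarith [abs_le.mp (hβ.abs_slope_le s), abs_le.mp (hβ.abs_slope_le e)]⟩

theorem SolvesOn.le_barrier_of_endpoints (hu : SolvesOn F u v (Icc s e))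
    (hF : IsPushedUp p n Γ κ r F u s e) (hβ : IsBarrier p n β β' T Γ lam r) (hr : 0 ≤ r)
    (hn : ∀ t, 0 ≤ n t) (hκ : lam ≤ κ) (hs : u s ≤ β s) (he : u e ≤ β e) :
    ∀ t ∈ Icc s e, u t ≤ β t := fun t ht =>
  sub_nonpos.mp ((hu.sub (hβ.solvesOn.mono (subset_univ (Icc s e)))).nonpos_of_endpoints
    (hF.sub_barrier_nonpos hβ hr hn hκ) (sub_nonpos.mpr hs) (sub_nonpos.mpr he) t ht)

theorem SolvesOn.neg_le_slope (hu : SolvesOn F u v (Icc s e)) (hF : IsPushedUp p n Γ κ r F u s e)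
    (hβ : IsBarrier p n β β' T Γ lam r) (hp : ∀ a b, IntervalIntegrable p volume a b)
    (hvs : -C ≤ v s) {t : ℝ} (ht : t ∈ Icc s e) (htT : t - s ≤ T) : -(C + r / T) ≤ v t := by
  have := hu.sub_integral_le_slope ht.1 ⟨le_rfl, ht.1.trans ht.2⟩ ht
    ((hp s t).const_mul Γ) fun x hx => hF.le x ⟨hx.1, hx.2.trans_le ht.2⟩
  rw [intervalIntegral.integral_const_mul] at this
  linarith [hβ.mul_integral_le s t ht.1 htT]

theorem SolvesOn.quarter_le (hu : SolvesOn F u v (Icc s e)) (hF : IsPushedUp p n Γ κ r F u s e)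
    (hβ : IsBarrier p n β β' T Γ lam r) (hp : ∀ a b, IntervalIntegrable p volume a b)
    (hus : r / 2 ≤ u s) (hvs : -C ≤ v s) {t : ℝ} (ht : t ∈ Icc s e) (htT : t - s ≤ T)
    (hshort : (C + r / T) * (t - s) ≤ r / 4) : r / 4 ≤ u t := by
  have := mul_sub_le_sub_of_forall_le_deriv hu.hasDerivAt ht.1 fun x hx =>
    hu.neg_le_slope hF hβ hp hvs ⟨hx.1.le, hx.2.le.trans ht.2⟩ (by linarith [hx.2])
  linarith

theorem SolvesOn.mul_integral_sub_le_slope (hu : SolvesOn F u v (Icc s e))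
    (hF : IsPushedUp p n Γ κ r F u s e) (hβ : IsBarrier p n β β' T Γ lam r)
    (hp : ∀ a b, IntervalIntegrable p volume a b) (hn : ∀ a b, IntervalIntegrable n volume a b)
    (hC : 0 ≤ C + r / T) (hus : r / 2 ≤ u s) (hvs : -C ≤ v s) {t : ℝ} (ht : t ∈ Icc s e)
    (htT : t - s ≤ T) (hshort : (C + r / T) * (t - s) ≤ r / 4) :
    κ * (∫ x in s..t, n x) - (C + r / T) ≤ v t := by
  have hle (x : ℝ) (hx : x ∈ Ioo s t) : F x ≤ Γ * p x - κ * n x := by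
    refine hF.le_of_quarter_le x ⟨hx.1, hx.2.trans_le ht.2⟩
      (hu.quarter_le hF hβ hp hus hvs ⟨hx.1.le, hx.2.le.trans ht.2⟩ (by linarith [hx.2]) ?_)
    exact (mul_le_mul_of_nonneg_left (by linarith [hx.2]) hC).trans hshort
  have := hu.sub_integral_le_slope ht.1 ⟨le_rfl, ht.1.trans ht.2⟩ ht
    (((hp s t).const_mul Γ).sub ((hn s t).const_mul κ)) hle
  rw [intervalIntegral.integral_sub ((hp s t).const_mul Γ) ((hn s t).const_mul κ),
    intervalIntegral.integral_const_mul, intervalIntegral.integral_const_mul] at this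
  linarith [hβ.mul_integral_le s t ht.1 htT]

/-- A pushed-up solution that starts at time `s` from a height at least `r / 2` with slope at least
`-C` is, from time `s + d` on, above `β` with slope larger than `V`. -/
def EscapesAbove (p n β : ℝ → ℝ) (Γ κ r s d C V : ℝ) : Prop :=
  ∀ F u v e, s + d ≤ e → SolvesOn F u v (Icc s e) → IsPushedUp p n Γ κ r F u s e →
    r / 2 ≤ u s → -C ≤ v s → β e < u e ∧ V < v e

theorem IsBarrier.eventually_escapesAbove (hβ : IsBarrier p n β β' T Γ lam r) (hT : 0 < T)
    (hr : 0 < r) (hp : IsWeight p T) (hn : IsWeight n T) {d V : ℝ} (hd : 0 < d) (hdT : d ≤ T)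
    (hC : 0 < C) (hnpos : ∀ d > 0, 0 < ∫ t in s..(s + d), n t) :
    ∀ᶠ κ in atTop, EscapesAbove p n β Γ κ r s d C V := by
  set C' := C + r / T
  have hC'₀ : 0 < C' := by positivity
  obtain ⟨δ, hδ, hδd, hδr⟩ : ∃ δ, 0 < δ ∧ δ ≤ d ∧ C' * δ ≤ r / 4 := by
    refine ⟨min d (r / 4 / C'), by positivity, min_le_left _ _, ?_⟩
    rw [mul_comm, ← le_div_iff₀ hC'₀]
    exact min_le_right _ _
  obtain ⟨Q, hQr, hQV, hQ⟩ : ∃ Q, r ≤ Q * (δ / 2) ∧ V + 2 * (r / T) < Q ∧ r / T < Q := by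
    refine ⟨max (r / (δ / 2)) (max (V + 2 * (r / T)) (r / T) + 1), ?_, ?_, ?_⟩
    · rw [← div_le_iff₀ (by positivity)]
      exact le_max_left _ _
    · exact lt_max_of_lt_right (by linarith [le_max_left (V + 2 * (r / T)) (r / T)])
    · exact lt_max_of_lt_right (by linarith [le_max_right (V + 2 * (r / T)) (r / T)])
  have hN := hnpos (δ / 2) (half_pos hδ)
  filter_upwards [eventually_ge_atTop lam, eventually_ge_atTop 0,
    eventually_ge_atTop ((Q + C') / ∫ t in s..(s + δ / 2), n t)] with κ hlam hκ₀ hκ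
  rw [div_le_iff₀ hN] at hκ
  intro F u v e he hu hF hus hvs
  have hsteep (t : ℝ) (ht : t ∈ Icc (s + δ / 2) (s + δ)) : Q ≤ v t := by
    have hmass := mul_le_mul_of_nonneg_left
      (hn.integral_mono le_rfl (by linarith) ht.1 : ∫ x in s..(s + δ / 2), n x ≤ _) hκ₀
    have hslope := hu.mul_integral_sub_le_slope hF hβ hp.intervalIntegrable hn.intervalIntegrable
      hC'₀.le hus hvs (t := t) ⟨by linarith [ht.1], by linarith [ht.2]⟩ (by linarith [ht.2])
      ((mul_le_mul_of_nonneg_left (by linarith [ht.2]) hC'₀.le).trans hδr)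
    linarith
  have hhigh : r < u (s + δ) := by
    have hquarter := hu.quarter_le hF hβ hp.intervalIntegrable hus hvs (t := s + δ / 2)
      ⟨by linarith, by linarith⟩ (by linarith)
      ((mul_le_mul_of_nonneg_left (by linarith) hC'₀.le).trans hδr)
    have := mul_sub_le_sub_of_forall_le_deriv hu.hasDerivAt (by linarith : s + δ / 2 ≤ s + δ)
      fun t ht => hsteep t (Ioo_subset_Icc_self ht)
    linarith
  have hv := hsteep (s + δ) ⟨by linarith, le_rfl⟩
  obtain ⟨h₁, h₂⟩ := (hu.mono (Icc_subset_Icc_left (by linarith))).barrier_lt_of_slope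
    (hF.mono (by linarith)) hβ hr.le hn.nonneg hlam (by linarith) hhigh (hQ.trans_le hv)
  exact ⟨h₁, by linarith⟩

end Escape

/-! ### The truncated equation -/

/-- The weight `p - μ n` has period `T` and is positive somewhere on `[0, σ]`, where `n` vanishes;
this interval is maximal, in that `n` has mass immediately after `σ` and immediately before `0`. -/
structure IsIndefiniteWeight (p n : ℝ → ℝ) (T σ : ℝ) : Prop where
  posPart : IsWeight p T
  negPart : IsWeight n T
  pos : 0 < σ
  lt : σ < T
  ae_eq_zero : ∀ᵐ t, t ∈ Icc 0 σ → n t = 0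
  integral_pos : 0 < ∫ t in 0..σ, p t
  integral_right_pos : ∀ d > 0, 0 < ∫ t in σ..(σ + d), n t
  integral_left_pos : ∀ d > 0, 0 < ∫ t in (-d)..0, n t

/-- A locally Lipschitz nonlinearity, positive on `(0, ∞)` and extended by zero to `(-∞, 0]`, which
is superlinear both at `0` and at `∞`. -/
structure IsSuperlinear (g : ℝ → ℝ) : Prop where
  eq_zero : ∀ s ≤ 0, g s = 0
  pos : ∀ s > 0, 0 < g s
  exists_lipschitzOnWith : ∀ R, ∃ L, LipschitzOnWith L g (Iic R)
  isLittleO_id : g =o[nhds 0] id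
  tendsto_div : Tendsto (fun s => g s / s) atTop atTop

namespace IsSuperlinear

variable {g : ℝ → ℝ}

theorem nonneg (hg : IsSuperlinear g) (s : ℝ) : 0 ≤ g s :=
  (le_or_gt s 0).elim (fun h => (hg.eq_zero s h).ge) fun h => (hg.pos s h).le

theorem continuous (hg : IsSuperlinear g) : Continuous g :=
  continuous_iff_continuousAt.mpr fun s =>
    have ⟨_, hL⟩ := hg.exists_lipschitzOnWith (s + 1)
    hL.continuousOn.continuousAt (Iic_mem_nhds (lt_add_one s))

theorem exists_pos_forall_le_mul (hg : IsSuperlinear g) {ε : ℝ} (hε : 0 < ε) :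
    ∃ r > 0, ∀ s ≤ r, g s ≤ ε * max s 0 := by
  obtain ⟨δ, hδ, hball⟩ := Metric.eventually_nhds_iff.mp (hg.isLittleO_id.def hε)
  refine ⟨δ / 2, half_pos hδ, fun s hs => ?_⟩
  rcases le_or_gt s 0 with hs₀ | hs₀
  · rw [hg.eq_zero s hs₀]
    positivity
  · have := hball (y := s) (by rw [Real.dist_eq, sub_zero, abs_of_pos hs₀]; linarith)
    rw [max_eq_left hs₀.le]
    simpa [abs_of_pos hs₀, abs_of_pos (hg.pos s hs₀)] using this

theorem exists_pos_forall_le (hg : IsSuperlinear g) {a b : ℝ} (ha : 0 < a) (hab : a ≤ b) :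
    ∃ γ > 0, ∀ s ∈ Icc a b, γ ≤ g s := by
  obtain ⟨x, hx, hmin⟩ := isCompact_Icc.exists_isMinOn (nonempty_Icc.mpr hab)
    hg.continuous.continuousOn
  exact ⟨g x, hg.pos x (ha.trans_le hx.1), fun s hs => hmin hs⟩

end IsSuperlinear

/-- The constants of a truncation of `u'' + (p - μ n) g(u) = 0`: a barrier `β` of size `r`, a level
`R` above which `g` is continued with slope `M` on `[0, σ]`, and the escape statements that hold
when `κ`, hence `μ`, is large. The field `escapesAbove_neg` is the one for reversed time. -/
structure Truncation (p n g : ℝ → ℝ) (T σ μ : ℝ) where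
  (β β' : ℝ → ℝ)
  (Γ lam κ r R M C : ℝ)
  isBarrier : IsBarrier p n β β' T Γ lam r
  r_pos : 0 < r
  M_pos : 0 < M
  C_pos : 0 < C
  μ_nonneg : 0 ≤ μ
  le_Γ : ∀ s ≤ 5 * r, g s ≤ Γ
  κ_le : ∀ s ∈ Icc (r / 4) r, κ ≤ μ * g s
  lam_le : lam ≤ κ
  five_mul_r_le : 5 * r ≤ R
  aprioriBound : AprioriBound p (linearExtension g R M) σ R C
  escapesAbove : EscapesAbove p n β Γ κ r σ (T - σ) C 0
  escapesAbove_neg : EscapesAbove (fun t => p (-t)) (fun t => n (-t)) (fun t => β (-t)) Γ κ r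
    0 (T - σ) C C

namespace Truncation

variable {p n g : ℝ → ℝ} {T σ μ : ℝ}

theorem exists_forall_nonempty (hw : IsIndefiniteWeight p n T σ) (hg : IsSuperlinear g) :
    ∃ μ₀ > 0, ∀ μ > μ₀, Nonempty (Truncation p n g T σ μ) := by
  have hσ := hw.pos
  have hT : 0 < T := hσ.trans hw.lt
  have hP : 0 < ∫ t in 0..T, p t :=
    hw.integral_pos.trans_le (hw.posPart.integral_mono le_rfl hσ.le hw.lt.le)
  have hN : 0 < ∫ t in 0..T, n t := by
    have := hw.integral_right_pos (T - σ) (sub_pos.mpr hw.lt)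
    rw [add_sub_cancel] at this
    exact this.trans_le (hw.negPart.integral_mono hσ.le hw.lt.le le_rfl)
  obtain ⟨ρ, hρ, hgρ⟩ := hg.exists_pos_forall_le_mul (ε := 1 / (40 * (∫ t in 0..T, p t) * T))
    (by positivity)
  obtain ⟨r, hr, rfl⟩ : ∃ r > 0, ρ = 5 * r := ⟨ρ / 5, by positivity, by ring⟩
  set Γ := 1 / (40 * (∫ t in 0..T, p t) * T) * (5 * r)
  have hΓ : 0 ≤ Γ := by positivity
  have hgΓ (s : ℝ) (hs : s ≤ 5 * r) : g s ≤ Γ :=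
    (hgρ s hs).trans (mul_le_mul_of_nonneg_left (max_le hs (by positivity)) (by positivity))
  have hΓP : Γ * ∫ t in 0..T, p t = r / T / 8 := by
    simp only [Γ]
    field_simp
    ring
  obtain ⟨lam, β, β', hβ⟩ := exists_isBarrier hT hw.posPart hw.negPart hN hΓ hΓP.le
  obtain ⟨R, C, M, hR, hC, hM, happ⟩ := exists_aprioriBound_linearExtension
    hw.posPart.intervalIntegrable hw.posPart.nonneg hσ hw.integral_pos hg.continuous hg.nonneg
    hg.tendsto_div (5 * r)
  obtain ⟨γ, hγ, hgγ⟩ := hg.exists_pos_forall_le (a := r / 4) (b := r) (by positivity) (by linarith)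
  have hescape := hβ.eventually_escapesAbove (s := σ) (V := 0) hT hr hw.posPart hw.negPart
    (sub_pos.mpr hw.lt) (by linarith) hC hw.integral_right_pos
  have hescape_neg := hβ.comp_neg.eventually_escapesAbove (s := 0) (V := C) hT hr
    hw.posPart.comp_neg hw.negPart.comp_neg (sub_pos.mpr hw.lt) (by linarith) hC fun d hd => by
      simpa using hw.integral_left_pos d hd
  obtain ⟨κ₀, hκ₀⟩ := eventually_atTop.mp ((hescape.and hescape_neg).and (eventually_ge_atTop lam))
  refine ⟨max (κ₀ / γ) 1, by positivity, fun μ hμ => ?_⟩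
  obtain ⟨hμγ, hμ₁⟩ := max_lt_iff.mp hμ
  have hμ₀ : 0 ≤ μ := by linarith
  obtain ⟨⟨h₁, h₂⟩, h₃⟩ := hκ₀ (μ * γ) ((div_lt_iff₀ hγ).mp hμγ).le
  exact ⟨β, β', Γ, lam, μ * γ, r, R, M, C, hβ, hr, hM, hC, hμ₀, hgΓ,
    fun s hs => mul_le_mul_of_nonneg_left (hgγ s hs) hμ₀, h₃, hR, happ, h₁, h₂⟩

variable (X : Truncation p n g T σ μ)

/-- The truncated right-hand side: on `[0, σ]` the nonlinearity grows linearly beyond `R`, after `σ`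
it is frozen above `β`. The weight `n`, which vanishes a.e. on `[0, σ]`, is dropped there. -/
noncomputable def field (t s : ℝ) : ℝ :=
  if t ≤ σ then p t * linearExtension g X.R X.M s else (p t - μ * n t) * g (min s (X.β t))

variable {t s : ℝ}

theorem field_of_le (ht : t ≤ σ) : X.field t s = p t * linearExtension g X.R X.M s :=
  if_pos ht

theorem field_of_lt (ht : σ < t) : X.field t s = (p t - μ * n t) * g (min s (X.β t)) :=
  if_neg ht.not_ge

theorem barrier_le_R (t : ℝ) : X.β t ≤ X.R := by
  linarith [X.isBarrier.le t, X.five_mul_r_le, X.r_pos]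

theorem isLipschitzCaratheodory_field (hw : IsIndefiniteWeight p n T σ) (hg : IsSuperlinear g) :
    IsLipschitzCaratheodory X.field := by
  obtain ⟨L, hL⟩ := hg.exists_lipschitzOnWith X.R
  have hβ : Continuous X.β := X.isBarrier.solvesOn.continuous
  have hp := hw.posPart.intervalIntegrable
  have hgc := hg.continuous
  refine .ite (.mul (L := L + X.M) hp ((continuous_linearExtension hgc X.R X.M).comp continuous_snd)
      fun _ => abs_linearExtension_sub_le hL X.M_pos.le)
    (.mul (q := fun t => p t - μ * n t) (φ := fun t s => g (min s (X.β t))) (L := L)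
      (fun a b => (hp a b).sub ((hw.negPart.intervalIntegrable a b).const_mul μ)) (by fun_prop)
      fun t s s' => ?_) σ
  have hR (s : ℝ) : min s (X.β t) ∈ Iic X.R := (min_le_right _ _).trans (X.barrier_le_R t)
  calc |g (min s (X.β t)) - g (min s' (X.β t))|
      ≤ L * |min s (X.β t) - min s' (X.β t)| := by
        simpa only [Real.dist_eq] using hL.dist_le_mul _ (hR s) _ (hR s')
    _ ≤ L * |s - s'| := mul_le_mul_of_nonneg_left
        (by simpa using abs_min_sub_min_le_max s (X.β t) s' (X.β t)) L.coe_nonneg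

theorem field_eq_zero (hg : IsSuperlinear g) (t : ℝ) (hs : s ≤ 0) : X.field t s = 0 := by
  rcases le_or_gt t σ with ht | ht
  · rw [X.field_of_le ht,
      linearExtension_of_le g X.M (by linarith [X.five_mul_r_le, X.r_pos] : s ≤ X.R),
      hg.eq_zero s hs, mul_zero]
  · rw [X.field_of_lt ht, hg.eq_zero _ ((min_le_left _ _).trans hs), mul_zero]

theorem field_le (hw : IsIndefiniteWeight p n T σ) (hg : IsSuperlinear g) (ht : σ < t) :
    X.field t s ≤ X.Γ * p t := by
  rw [X.field_of_lt ht]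
  have hΓ : g (min s (X.β t)) ≤ X.Γ :=
    X.le_Γ _ ((min_le_right _ _).trans (by linarith [X.isBarrier.le t, X.r_pos]))
  have hp := mul_le_mul_of_nonneg_left hΓ (hw.posPart.nonneg t)
  have hn := mul_nonneg (mul_nonneg X.μ_nonneg (hw.negPart.nonneg t)) (hg.nonneg (min s (X.β t)))
  linarith

theorem field_le_of_quarter_le (hw : IsIndefiniteWeight p n T σ) (ht : σ < t)
    (hs : X.r / 4 ≤ s) : X.field t s ≤ X.Γ * p t - X.κ * n t := by
  rw [X.field_of_lt ht]
  have hβ := X.isBarrier.le t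
  have hβ' := X.isBarrier.half_le t
  have hr := X.r_pos
  have hΓ : g (min s (X.β t)) ≤ X.Γ := X.le_Γ _ ((min_le_right _ _).trans (by linarith))
  have hκ : X.κ ≤ μ * g (min s (X.β t)) :=
    X.κ_le _ ⟨le_min hs (by linarith), (min_le_right _ _).trans hβ⟩
  have hp := mul_le_mul_of_nonneg_left hΓ (hw.posPart.nonneg t)
  have hn := mul_le_mul_of_nonneg_right hκ (hw.negPart.nonneg t)
  linarith

theorem isPushedUp (hw : IsIndefiniteWeight p n T σ) (hg : IsSuperlinear g) (u : ℝ → ℝ) (K : ℝ) :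
    IsPushedUp p n X.Γ X.κ X.r (fun t => X.field t (u t)) u σ K :=
  ⟨fun _ ht => X.field_le hw hg ht.1, fun _ ht => X.field_le_of_quarter_le hw ht.1⟩

/-- Time reversal `t ↦ K - t` with `K` a multiple of the period. -/
theorem isPushedUp_reflect (hw : IsIndefiniteWeight p n T σ) (hg : IsSuperlinear g) (u : ℝ → ℝ)
    (k : ℕ) :
    IsPushedUp (fun t => p (-t)) (fun t => n (-t)) X.Γ X.κ X.r
      (fun t => X.field (k * T - t) (u (k * T - t))) (fun t => u (k * T - t)) 0 (k * T - σ) := by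
  have hp (t : ℝ) : p (k * T - t) = p (-t) := (hw.posPart.periodic.nat_mul k).sub_eq'
  have hn (t : ℝ) : n (k * T - t) = n (-t) := (hw.negPart.periodic.nat_mul k).sub_eq'
  refine ⟨fun t ht => ?_, fun t ht hu => ?_⟩
  · rw [← hp]
    exact X.field_le hw hg (by linarith [ht.2])
  · rw [← hp, ← hn]
    exact X.field_le_of_quarter_le hw (by linarith [ht.2]) hu

end Truncation

/-! ### Periodic solutions of the truncated equation -/

theorem deriv_nonpos_of_nonneg_of_eq_zero {u : ℝ → ℝ} {u' a b : ℝ} (hab : a < b)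
    (hu : HasDerivAt u u' b) (hnonneg : ∀ t ∈ Ioo a b, 0 ≤ u t) (hb : u b = 0) : u' ≤ 0 := by
  refine le_of_tendsto ((hasDerivWithinAt_iff_tendsto_slope' (self_notMem_Iio)).mp
    hu.hasDerivWithinAt) ?_
  filter_upwards [Ioo_mem_nhdsLT hab] with t ht
  rw [slope_def_field, hb, sub_zero]
  exact div_nonpos_of_nonneg_of_nonpos (hnonneg t ht) (sub_nonpos.mpr ht.2.le)

namespace Truncation

variable {p n g u v : ℝ → ℝ} {T σ μ K : ℝ} (X : Truncation p n g T σ μ)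

/-- The slope with which the shooting starts: it forces `u` to rise above `β` on `[0, σ]`. -/
noncomputable def entrySlope : ℝ :=
  4 * X.r / σ

theorem entrySlope_mul (hw : IsIndefiniteWeight p n T σ) : X.entrySlope * σ = 4 * X.r :=
  div_mul_cancel₀ _ hw.pos.ne'

theorem entrySlope_pos (hw : IsIndefiniteWeight p n T σ) : 0 < X.entrySlope :=
  div_pos (by linarith [X.r_pos]) hw.pos

theorem nonneg_of_endpoints (hg : IsSuperlinear g)
    (hu : SolvesOn (fun t => X.field t (u t)) u v (Icc 0 K)) (h₀ : 0 ≤ u 0) (hK : 0 ≤ u K) :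
    ∀ t ∈ Icc 0 K, 0 ≤ u t :=
  hu.nonneg_of_endpoints (fun t _ h => (X.field_eq_zero hg t h).ge) h₀ hK

theorem bounds_of_nonneg (hu : SolvesOn (fun t => X.field t (u t)) u v (Icc 0 K))
    (hσK : σ ≤ K) (hw : IsIndefiniteWeight p n T σ) (hg : IsSuperlinear g)
    (hnonneg : ∀ t ∈ Icc 0 K, 0 ≤ u t) :
    (∀ t ∈ Icc 0 σ, u t ≤ X.R) ∧ v 0 ≤ X.C ∧ -X.C ≤ v σ := by
  have hcont := (continuous_linearExtension hg.continuous X.R X.M).comp hu.continuous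
  exact X.aprioriBound u v
    ((hu.mono (Icc_subset_Icc_right hσK)).congr
      (fun a b => (hw.posPart.intervalIntegrable a b).mul_continuousOn hcont.continuousOn)
      fun t ht => X.field_of_le ht.2)
    fun t ht => hnonneg t ⟨ht.1, ht.2.trans hσK⟩

theorem three_mul_r_div_le_slope (hu : SolvesOn (fun t => X.field t (u t)) u v (Icc 0 K))
    (hσK : σ ≤ K) (hw : IsIndefiniteWeight p n T σ)
    (h₀ : X.entrySlope ≤ v 0) (hle : ∀ t ∈ Icc 0 σ, u t ≤ 5 * X.r) :
    ∀ t ∈ Icc 0 σ, 3 * X.r / σ ≤ v t := by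
  intro t ht
  have hfield (s : ℝ) (hs : s ∈ Ioo 0 t) : X.field s (u s) ≤ X.Γ * p s := by
    have hsσ : s ∈ Icc 0 σ := ⟨hs.1.le, hs.2.le.trans ht.2⟩
    rw [X.field_of_le hsσ.2, linearExtension_of_le g X.M ((hle s hsσ).trans X.five_mul_r_le),
      mul_comm]
    exact mul_le_mul_of_nonneg_right (X.le_Γ _ (hle s hsσ)) (hw.posPart.nonneg s)
  have hloss := hu.sub_integral_le_slope ht.1 ⟨le_rfl, ht.1.trans (ht.2.trans hσK)⟩
    ⟨ht.1, ht.2.trans hσK⟩ ((hw.posPart.intervalIntegrable 0 t).const_mul X.Γ) hfield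
  have hΓ := X.isBarrier.mul_integral_le 0 t ht.1 (by linarith [ht.2, hw.lt])
  have hrσ : X.r / T ≤ X.r / σ := div_le_div_of_nonneg_left X.r_pos.le hw.pos hw.lt.le
  rw [intervalIntegral.integral_const_mul] at hloss
  have : 3 * X.r / σ = X.entrySlope - X.r / σ := by rw [entrySlope]; ring
  linarith

theorem three_mul_r_le (hu : SolvesOn (fun t => X.field t (u t)) u v (Icc 0 K))
    (hσK : σ ≤ K) (hw : IsIndefiniteWeight p n T σ)
    (hu₀ : 0 ≤ u 0) (h₀ : X.entrySlope ≤ v 0) (hle : ∀ t ∈ Icc 0 σ, u t ≤ 5 * X.r) :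
    3 * X.r ≤ u σ := by
  have := mul_sub_le_sub_of_forall_le_deriv hu.hasDerivAt hw.pos.le fun t ht =>
    X.three_mul_r_div_le_slope hu hσK hw h₀ hle t (Ioo_subset_Icc_self ht)
  rw [sub_zero, div_mul_cancel₀ _ hw.pos.ne'] at this
  linarith

theorem le_five_mul_r (hu : SolvesOn (fun t => X.field t (u t)) u v (Icc 0 K))
    (hσK : σ ≤ K) (hw : IsIndefiniteWeight p n T σ) (hg : IsSuperlinear g)
    (hu₀ : u 0 ≤ X.r) (h₀ : v 0 = X.entrySlope) : ∀ t ∈ Icc 0 σ, u t ≤ 5 * X.r := by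
  intro t ht
  have hrise := (hu.mono (Icc_subset_Icc_right hσK)).sub_le_slope_mul (fun s hs => by
    rw [X.field_of_le hs.2.le]
    exact mul_nonneg (hw.posPart.nonneg s) (linearExtension_nonneg hg.nonneg X.M_pos.le _))
    le_rfl ht.1 ht.2
  have := mul_le_mul_of_nonneg_left ht.2 (X.entrySlope_pos hw).le
  rw [X.entrySlope_mul hw] at this
  rw [h₀, sub_zero] at hrise
  linarith

theorem barrier_lt_of_slope_eq (hu : SolvesOn (fun t => X.field t (u t)) u v (Icc 0 K))
    (hσK : σ ≤ K) (hw : IsIndefiniteWeight p n T σ) (hg : IsSuperlinear g)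
    (hu₀ : u 0 ∈ Icc 0 X.r) (h₀ : v 0 = X.entrySlope) : X.β K < u K := by
  have hr := X.r_pos
  have hle := X.le_five_mul_r hu hσK hw hg hu₀.2 h₀
  have hslope := X.three_mul_r_div_le_slope hu hσK hw h₀.ge hle σ ⟨hw.pos.le, le_rfl⟩
  have hlevel := X.three_mul_r_le hu hσK hw hu₀.1 h₀.ge hle
  have hrT : X.r / T < 3 * X.r / σ :=
    div_lt_div₀ (by linarith) hw.lt.le (by linarith) hw.pos
  exact ((hu.mono (Icc_subset_Icc_left hw.pos.le)).barrier_lt_of_slope (X.isPushedUp hw hg u K)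
    X.isBarrier hr.le hw.negPart.nonneg X.lam_le hσK (by linarith) (hrT.trans_le hslope)).1

/-- Otherwise the solution, followed backwards in time from `k * T` to `σ`, would escape above the
barrier and violate the a priori bound on `v σ`. -/
theorem slope_le_slope_of_eq_barrier {k : ℕ} (hk : 1 ≤ k)
    (hu : SolvesOn (fun t => X.field t (u t)) u v (Icc 0 (k * T)))
    (hw : IsIndefiniteWeight p n T σ) (hg : IsSuperlinear g) (hu₀ : 0 ≤ u 0)
    (hend : u (k * T) = X.β (k * T)) : v 0 ≤ v (k * T) := by
  have hT : T ≤ k * T := le_mul_of_one_le_left (hw.pos.trans hw.lt).le (mod_cast hk)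
  have hσK : σ ≤ k * T := hw.lt.le.trans hT
  have hβ := X.isBarrier.half_le (k * T)
  obtain ⟨-, hv₀, hvσ⟩ := X.bounds_of_nonneg hu hσK hw hg
    (X.nonneg_of_endpoints hg hu hu₀ (by linarith [X.r_pos]))
  by_contra! hv
  have hescape := X.escapesAbove_neg _ _ _ (k * T - σ) (by linarith)
    ((hu.reflect (k * T)).mono fun t ht => ⟨by linarith [ht.2, hw.pos], by linarith [ht.1]⟩)
    (X.isPushedUp_reflect hw hg u k) (by simpa only [sub_zero, hend] using hβ)
    (by simpa only [sub_zero, neg_le_neg_iff] using hv.le.trans hv₀)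
  have := hescape.2
  rw [sub_sub_cancel] at this
  linarith

theorem neg_of_C_lt_slope (hu : SolvesOn (fun t => X.field t (u t)) u v (Icc 0 K))
    (hσK : σ ≤ K) (hw : IsIndefiniteWeight p n T σ) (hg : IsSuperlinear g) (hu₀ : 0 ≤ u 0)
    (h₀ : X.C < v 0) : u K < 0 := by
  by_contra! h
  exact h₀.not_ge (X.bounds_of_nonneg hu hσK hw hg (X.nonneg_of_endpoints hg hu hu₀ h)).2.1

theorem slope_nonpos_of_eq_zero (hu : SolvesOn (fun t => X.field t (u t)) u v (Icc 0 K))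
    (hK : 0 < K) (hg : IsSuperlinear g) (hu₀ : 0 ≤ u 0) (hend : u K = 0) : v K ≤ 0 :=
  deriv_nonpos_of_nonneg_of_eq_zero hK (hu.hasDerivAt K)
    (fun t ht => X.nonneg_of_endpoints hg hu hu₀ hend.ge t (Ioo_subset_Icc_self ht)) hend

theorem exists_periodic_boundary {k : ℕ} (hk : 1 ≤ k) (hw : IsIndefiniteWeight p n T σ)
    (hg : IsSuperlinear g) :
    ∃ u v, SolvesOn (fun t => X.field t (u t)) u v (Icc 0 (k * T)) ∧ u (k * T) = u 0 ∧
      v (k * T) = v 0 ∧ u 0 ∈ Icc 0 (X.β (k * T)) ∧ X.entrySlope ≤ v 0 := by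
  set K := k * T
  have hσK : σ ≤ K :=
    hw.lt.le.trans (le_mul_of_one_le_left (hw.pos.trans hw.lt).le (mod_cast hk))
  have hK : 0 < K := hw.pos.trans_le hσK
  have hβK : 0 ≤ X.β K := by linarith [X.isBarrier.half_le K, X.r_pos]
  have hslope := X.entrySlope_pos hw
  obtain ⟨u, v, hflow, hu, hv⟩ := (X.isLipschitzCaratheodory_field hw hg).exists_flow hK.le
  have hsol (z) := (hflow z).1
  have hu₀ (z) : u z 0 = z.1 := (hflow z).2.1
  have hv₀ (z) : v z 0 = z.2 := (hflow z).2.2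
  obtain ⟨y₁, hy₁, hCy₁⟩ : ∃ y₁, X.entrySlope ≤ y₁ ∧ X.C < y₁ :=
    ⟨X.entrySlope + X.C, by linarith [X.C_pos], by linarith⟩
  have hbottom : ∀ x ∈ Icc 0 (X.β K), 0 < u (x, X.entrySlope) K - x := fun x hx =>
    sub_pos.mpr (hx.2.trans_lt (X.barrier_lt_of_slope_eq (hsol _) hσK hw hg
      (by rw [hu₀]; exact ⟨hx.1, hx.2.trans (X.isBarrier.le K)⟩) (hv₀ _)))
  have htop : ∀ x ∈ Icc 0 (X.β K), u (x, y₁) K - x < 0 := fun x hx =>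
    sub_neg.mpr ((X.neg_of_C_lt_slope (hsol _) hσK hw hg (by rw [hu₀]; exact hx.1)
      (by rw [hv₀]; exact hCy₁)).trans_le hx.1)
  have hleft : ∀ y ∈ Icc X.entrySlope y₁, u (0, y) K - 0 = 0 → 0 ≤ y - v (0, y) K := by
    intro y hy h
    have := X.slope_nonpos_of_eq_zero (hsol (0, y)) hK hg (hu₀ (0, y)).ge (sub_eq_zero.mp h)
    linarith [hy.1]
  have hright : ∀ y ∈ Icc X.entrySlope y₁, u (X.β K, y) K - X.β K = 0 →
      y - v (X.β K, y) K ≤ 0 := by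
    intro y _ h
    simpa only [hv₀] using sub_nonpos.mpr (X.slope_le_slope_of_eq_barrier hk (hsol (X.β K, y)) hw hg
      (by rwa [hu₀]) (sub_eq_zero.mp h))
  obtain ⟨x, hx, y, hy, hux, hvy⟩ := exists_mem_Icc_eq_zero_of_sign
    (F₁ := fun z => u z K - z.1) (F₂ := fun z => z.2 - v z K) (by fun_prop) (by fun_prop) hβK hy₁
    hbottom htop hleft hright
  exact ⟨u (x, y), v (x, y), hsol _, (sub_eq_zero.mp hux).trans (hu₀ _).symm,
    (sub_eq_zero.mp hvy).symm.trans (hv₀ _).symm, by rwa [hu₀], by rw [hv₀]; exact hy.1⟩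

theorem le_barrier {k : ℕ} (hk : 1 ≤ k)
    (hu : SolvesOn (fun t => X.field t (u t)) u v (Icc 0 (k * T)))
    (hw : IsIndefiniteWeight p n T σ) (hg : IsSuperlinear g)
    (hnonneg : ∀ t ∈ Icc 0 (k * T), 0 ≤ u t) (hend : u (k * T) ≤ X.β (k * T)) :
    ∀ t ∈ Icc σ (k * T), u t ≤ X.β t := by
  have hT : T ≤ k * T := le_mul_of_one_le_left (hw.pos.trans hw.lt).le (mod_cast hk)
  have hvσ := (X.bounds_of_nonneg hu (hw.lt.le.trans hT) hw hg hnonneg).2.2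
  have huσ := hu.mono (Icc_subset_Icc_left hw.pos.le)
  have hpush := X.isPushedUp hw hg u (k * T)
  refine huσ.le_barrier_of_endpoints hpush X.isBarrier X.r_pos.le hw.negPart.nonneg X.lam_le ?_ hend
  by_contra! h
  exact hend.not_gt (X.escapesAbove _ _ _ _ (by linarith) huσ hpush
    ((X.isBarrier.half_le σ).trans h.le) hvσ).1

theorem exists_barrier_lt (hu : SolvesOn (fun t => X.field t (u t)) u v (Icc 0 K))
    (hσK : σ ≤ K) (hw : IsIndefiniteWeight p n T σ)
    (hu₀ : 0 ≤ u 0) (h₀ : X.entrySlope ≤ v 0) : ∃ t ∈ Icc 0 σ, X.β t < u t := by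
  by_contra! h
  have hr := X.r_pos
  have := X.three_mul_r_le hu hσK hw hu₀ h₀ fun t ht => by linarith [h t ht, X.isBarrier.le t]
  linarith [h σ ⟨hw.pos.le, le_rfl⟩, X.isBarrier.le σ]

theorem solvesOn_of_bounds (hu : SolvesOn (fun t => X.field t (u t)) u v (Icc 0 K))
    (hw : IsIndefiniteWeight p n T σ) (hg : IsSuperlinear g) (hR : ∀ t ∈ Icc 0 σ, u t ≤ X.R)
    (hβ : ∀ t ∈ Icc σ K, u t ≤ X.β t) :
    SolvesOn (fun t => (p t - μ * n t) * g (u t)) u v (Icc 0 K) where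
  hasDerivAt := hu.hasDerivAt
  intervalIntegrable a b := ((hw.posPart.intervalIntegrable a b).sub
    ((hw.negPart.intervalIntegrable a b).const_mul μ)).mul_continuousOn
    (hg.continuous.comp hu.continuous).continuousOn
  slope_sub a ha b hb := by
    rw [hu.slope_sub a ha b hb]
    refine congrArg Neg.neg (intervalIntegral.integral_congr_ae ?_)
    filter_upwards [hw.ae_eq_zero] with t hn ht
    have htK : t ∈ Icc 0 K := uIcc_subset_Icc ha hb (uIoc_subset_uIcc ht)
    rcases le_or_gt t σ with htσ | htσ
    · rw [X.field_of_le htσ, linearExtension_of_le g X.M (hR t ⟨htK.1, htσ⟩), hn ⟨htK.1, htσ⟩,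
        mul_zero, sub_zero]
    · rw [X.field_of_lt htσ, min_eq_left (hβ t ⟨htσ.le, htK.2⟩)]

end Truncation

/-! ### Positive subharmonic solutions -/

theorem SolvesOn.exists_periodic_extension_of_periodic {q g u v : ℝ → ℝ} {K : ℝ} (hK : 0 < K)
    (hq : Function.Periodic q K) (h : SolvesOn (fun t => q t * g (u t)) u v (Icc 0 K))
    (hu : u K = u 0) (hv : v K = v 0) :
    ∃ U V : ℝ → ℝ, Function.Periodic U K ∧ EqOn U u (Icc 0 K) ∧
      SolvesOn (fun t => q t * g (U t)) U V univ := by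
  obtain ⟨U, V, hper, heq, hsol⟩ := h.exists_periodic_extension hK hu hv
  refine ⟨U, V, hper, heq, ?_⟩
  have hmod {f : ℝ → ℝ} (hf : Function.Periodic f K) (t : ℝ) : f (toIcoMod hK 0 t) = f t :=
    hf.sub_zsmul_eq _
  have hfield : (fun t => q (toIcoMod hK 0 t) * g (u (toIcoMod hK 0 t))) =
      fun t => q t * g (U t) := by
    funext t
    rw [← heq ⟨left_le_toIcoMod hK 0 t, by simpa using (toIcoMod_lt_right hK 0 t).le⟩,
      hmod hq, hmod hper]
  exact hfield ▸ hsol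

theorem SolvesOn.pos_of_periodic {q g u v : ℝ → ℝ} {K : ℝ} (hK : 0 < K)
    (h : SolvesOn (fun t => q t * g (u t)) u v univ)
    (hq : ∀ a b, IntervalIntegrable q volume a b) (hg : IsSuperlinear g)
    (hper : Function.Periodic u K) (hnonneg : ∀ t, 0 ≤ u t) (hne : u ≠ 0) (t : ℝ) : 0 < u t := by
  obtain ⟨R, hR⟩ := (hper.isBounded_of_continuous hK.ne' h.continuous).bddAbove
  obtain ⟨L, hL⟩ := hg.exists_lipschitzOnWith R
  refine h.pos_of_nonneg (ℓ := fun t => |q t| * L) (fun a b => (hq a b).abs.mul_const _)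
    (fun t => by positivity) (fun t => ?_) hnonneg hne t
  have hut : u t ≤ R := hR (mem_range_self t)
  have := hL.dist_le_mul _ hut 0 ((hnonneg t).trans hut)
  rw [hg.eq_zero 0 le_rfl, Real.dist_eq, Real.dist_eq, sub_zero, sub_zero] at this
  rw [abs_mul, mul_assoc]
  exact mul_le_mul_of_nonneg_left this (abs_nonneg _)

theorem Truncation.exists_solvesOn {p n g : ℝ → ℝ} {T σ μ : ℝ} (X : Truncation p n g T σ μ)
    {k : ℕ} (hk : 1 ≤ k) (hw : IsIndefiniteWeight p n T σ) (hg : IsSuperlinear g) :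
    ∃ u v, SolvesOn (fun t => (p t - μ * n t) * g (u t)) u v (Icc 0 (k * T)) ∧
      u (k * T) = u 0 ∧ v (k * T) = v 0 ∧ (∀ t ∈ Icc 0 (k * T), 0 ≤ u t) ∧
      (∀ t ∈ Icc σ (k * T), u t ≤ X.β t) ∧ ∃ t ∈ Icc 0 σ, X.β t < u t := by
  obtain ⟨u, v, hsol, hu, hv, hu₀, hv₀⟩ := X.exists_periodic_boundary hk hw hg
  have hσK : σ ≤ k * T :=
    hw.lt.le.trans (le_mul_of_one_le_left (hw.pos.trans hw.lt).le (mod_cast hk))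
  have hnonneg := X.nonneg_of_endpoints hg hsol hu₀.1 (hu ▸ hu₀.1)
  have hβ := X.le_barrier hk hsol hw hg hnonneg (hu ▸ hu₀.2)
  exact ⟨u, v, X.solvesOn_of_bounds hsol hw hg (X.bounds_of_nonneg hsol hσK hw hg hnonneg).1 hβ,
    hu, hv, hnonneg, hβ, X.exists_barrier_lt hsol hσK hw hu₀.1 hv₀⟩

/-- A period `ℓ * T` with `ℓ < k` would carry the point of `[0, σ]` where `u` exceeds `b` into
`[σ, k * T]`, where `u` lies below `b`. -/
theorem isSubharmonic_of_barrier {u b : ℝ → ℝ} {T σ : ℝ} {k : ℕ} (hT : σ ≤ T)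
    (hu : Function.Periodic u (k * T)) (hb : Function.Periodic b T)
    (hle : ∀ t ∈ Icc σ (k * T), u t ≤ b t) (hlt : ∃ t ∈ Icc 0 σ, b t < u t) :
    IsSubharmonic u T k := by
  obtain ⟨t, ht, hbu⟩ := hlt
  have hT₀ : 0 ≤ T := (ht.1.trans ht.2).trans hT
  refine ⟨hu, fun ℓ hℓ hℓk hper => ?_⟩
  have hTℓ : T ≤ ℓ * T := le_mul_of_one_le_left hT₀ (mod_cast hℓ)
  have hℓK : (ℓ + 1) * T ≤ k * T := mul_le_mul_of_nonneg_right (mod_cast hℓk) hT₀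
  have := hle (t + ℓ * T) ⟨by linarith [ht.1], by linarith [ht.2]⟩
  rw [hper t, hb.nat_mul ℓ t] at this
  exact hbu.not_ge this

theorem exists_isSubharmonic_solvesOn {p n g : ℝ → ℝ} {T σ : ℝ} (hw : IsIndefiniteWeight p n T σ)
    (hg : IsSuperlinear g) :
    ∃ μ₀ > 0, ∀ μ > μ₀, ∀ k ≥ 1, ∃ u v,
      SolvesOn (fun t => (p t - μ * n t) * g (u t)) u v univ ∧ (∀ t, 0 < u t) ∧
      IsSubharmonic u T k := by
  obtain ⟨μ₀, hμ₀, H⟩ := Truncation.exists_forall_nonempty hw hg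
  refine ⟨μ₀, hμ₀, fun μ hμ k hk => ?_⟩
  obtain ⟨X⟩ := H μ hμ
  have hσK : σ ≤ k * T :=
    hw.lt.le.trans (le_mul_of_one_le_left (hw.pos.trans hw.lt).le (mod_cast hk))
  have hK : 0 < k * T := hw.pos.trans_le hσK
  have hq : Function.Periodic (fun t => p t - μ * n t) T := fun t => by
    simp only [hw.posPart.periodic t, hw.negPart.periodic t]
  obtain ⟨u₀, v₀, hsol₀, hu₀, hv₀, hnonneg, hle, t₁, ht₁, hlt⟩ := X.exists_solvesOn hk hw hg
  obtain ⟨u, v, hper, heq, hsol⟩ :=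
    hsol₀.exists_periodic_extension_of_periodic hK (hq.nat_mul k) hu₀ hv₀
  rw [← heq ⟨ht₁.1, ht₁.2.trans hσK⟩] at hlt
  have hβ₁ : 0 < X.β t₁ := by linarith [X.r_pos, X.isBarrier.half_le t₁]
  refine ⟨u, v, hsol, hsol.pos_of_periodic hK (fun a b => (hw.posPart.intervalIntegrable a b).sub
    ((hw.negPart.intervalIntegrable a b).const_mul μ)) hg hper (fun t => ?_) ?_,
    isSubharmonic_of_barrier hw.lt.le hper X.isBarrier.periodic
      (fun t ht => (heq ⟨hw.pos.le.trans ht.1, ht.2⟩).trans_le (hle t ht)) ⟨t₁, ht₁, hlt⟩⟩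
  · obtain ⟨y, hy, hty⟩ := hper.exists_mem_Ico₀ hK t
    rw [hty, heq (Ico_subset_Icc_self hy)]
    exact hnonneg y (Ico_subset_Icc_self hy)
  · rintro rfl
    exact (hβ₁.trans hlt).false

/-! ### Reduction to the normalized problem -/

theorem intervalIntegrable_of_locallyIntegrable {f : ℝ → ℝ} (hf : LocallyIntegrable f)
    (a b : ℝ) : IntervalIntegrable f volume a b :=
  (hf.integrableOn_isCompact isCompact_uIcc).intervalIntegrable

theorem locallyIntegrable_max_zero {f : ℝ → ℝ} (hf : LocallyIntegrable f) :
    LocallyIntegrable fun t => max (f t) 0 :=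
  locallyIntegrable_iff.mpr fun s hs => (locallyIntegrable_iff.mp hf s hs).pos_part

theorem isWeight_max_zero {f : ℝ → ℝ} {T : ℝ} (hper : Function.Periodic f T)
    (hf : LocallyIntegrable f) : IsWeight (fun t => max (f t) 0) T where
  periodic t := by simp only [hper t]
  nonneg _ := le_max_right _ _
  intervalIntegrable := intervalIntegrable_of_locallyIntegrable (locallyIntegrable_max_zero hf)

theorem integral_max_zero_eq_zero_iff {f : ℝ → ℝ} {x y : ℝ} (hxy : x ≤ y)
    (hf : LocallyIntegrable f) :
    ∫ t in x..y, max (f t) 0 = 0 ↔ ∀ᵐ t ∂volume.restrict (Icc x y), f t ≤ 0 := by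
  rw [intervalIntegral.integral_eq_zero_iff_of_le_of_nonneg_ae hxy
    (f := fun t => max (f t) 0) (.of_forall fun _ => le_max_right _ _)
    (intervalIntegrable_of_locallyIntegrable (locallyIntegrable_max_zero hf) x y),
    Measure.restrict_congr_set Ioc_ae_eq_Icc]
  exact eventually_congr (.of_forall fun t => max_eq_right_iff)

theorem integral_max_zero_pos_iff {f : ℝ → ℝ} {x y : ℝ} (hxy : x ≤ y)
    (hf : LocallyIntegrable f) :
    0 < ∫ t in x..y, max (f t) 0 ↔ ¬∀ᵐ t ∂volume.restrict (Icc x y), f t ≤ 0 := by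
  rw [← integral_max_zero_eq_zero_iff hxy hf]
  exact (intervalIntegral.integral_nonneg hxy fun _ _ => le_max_right _ _).lt_iff_ne'

theorem PosOn.lt {q : ℝ → ℝ} {x y : ℝ} (h : PosOn q (Icc x y)) : x < y := by
  by_contra! hyx
  refine h.2 ?_
  rw [Measure.restrict_eq_zero.mpr (by simpa using hyx)]
  exact ae_zero.symm ▸ mem_bot

theorem PosOn.not_ae_nonpos {q : ℝ → ℝ} {I : Set ℝ} (h : PosOn q I) :
    ¬∀ᵐ t ∂volume.restrict I, q t ≤ 0 := fun hq =>
  h.2 (hq.mp (h.1.mono fun _ h₁ h₂ => le_antisymm h₂ h₁))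

theorem IsWeight.exists_maximal_integral_eq_zero {n : ℝ → ℝ} {T x y : ℝ} (hn : IsWeight n T)
    (hT : 0 < T) (hpos : 0 < ∫ t in 0..T, n t) (hzero : ∫ t in x..y, n t = 0) :
    ∃ τ₀ ≤ x, ∃ τ₁ ≥ y, τ₁ < τ₀ + T ∧ ∫ t in τ₀..τ₁, n t = 0 ∧
      (∀ d > 0, 0 < ∫ t in τ₁..(τ₁ + d), n t) ∧ ∀ d > 0, 0 < ∫ t in (τ₀ - d)..τ₀, n t := by
  have hint := hn.intervalIntegrable
  have hperiod (z : ℝ) : 0 < ∫ t in z..(z + T), n t := by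
    rwa [hn.periodic.intervalIntegral_add_eq z 0, zero_add]
  set Z : Set ℝ := {z | ∫ t in x..z, n t = 0}
  have hdiff {b c : ℝ} (hb : b ∈ Z) : ∫ t in b..c, n t = ∫ t in x..c, n t := by
    rw [← intervalIntegral.integral_interval_sub_left (hint x c) (hint x b), hb, sub_zero]
  have hbound {b c : ℝ} (hb : b ∈ Z) (hc : c ∈ Z) : c < b + T := by
    by_contra! h
    have := hn.integral_mono le_rfl (by linarith : b ≤ b + T) h
    rw [hdiff hb (c := c), hc] at this
    exact (hperiod b).not_ge this
  have hx : x ∈ Z := intervalIntegral.integral_same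
  have hZ : IsCompact Z := by
    refine isCompact_Icc.of_isClosed_subset (isClosed_eq
      (intervalIntegral.continuous_primitive hint x) continuous_const)
      (fun z hz => (⟨?_, (hbound hx hz).le⟩ : z ∈ Icc (x - T) (x + T)))
    linarith [hbound hz hx]
  obtain ⟨τ₀, hτ₀, hleast⟩ := hZ.exists_isLeast ⟨x, hx⟩
  obtain ⟨τ₁, hτ₁, hgreatest⟩ := hZ.exists_isGreatest ⟨x, hx⟩
  refine ⟨τ₀, hleast hx, τ₁, hgreatest hzero, hbound hτ₀ hτ₁, (hdiff hτ₀).trans hτ₁,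
    fun d hd => ?_, fun d hd => ?_⟩
  · refine (hn.integral_nonneg (by linarith)).lt_of_ne' fun h => ?_
    have := hgreatest ((hdiff hτ₁).symm.trans h)
    linarith
  · refine (hn.integral_nonneg (by linarith)).lt_of_ne' fun h => ?_
    have hmem : τ₀ - d ∈ Z := by
      rw [intervalIntegral.integral_symm, neg_eq_zero, hdiff hτ₀] at h
      exact h
    have := hleast hmem
    linarith

theorem exists_isIndefiniteWeight_shift {p n : ℝ → ℝ} {T x y : ℝ} (hp : IsWeight p T)
    (hn : IsWeight n T) (hT : 0 < T) (hnpos : 0 < ∫ t in 0..T, n t) (hxy : x < y)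
    (hzero : ∫ t in x..y, n t = 0) (hppos : 0 < ∫ t in x..y, p t) :
    ∃ τ σ, IsIndefiniteWeight (fun t => p (t + τ)) (fun t => n (t + τ)) T σ := by
  obtain ⟨τ₀, hτ₀, τ₁, hτ₁, hlt, hmass, hright, hleft⟩ :=
    hn.exists_maximal_integral_eq_zero hT hnpos hzero
  have hσ : 0 < τ₁ - τ₀ := by linarith
  refine ⟨τ₀, τ₁ - τ₀, hp.comp_add_right τ₀, hn.comp_add_right τ₀, hσ, by linarith, ?_, ?_,
    fun d hd => ?_, fun d hd => ?_⟩
  · have := (intervalIntegral.integral_eq_zero_iff_of_le_of_nonneg_ae hσ.le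
      (.of_forall (hn.comp_add_right τ₀).nonneg)
      ((hn.comp_add_right τ₀).intervalIntegrable 0 _)).mp (by simpa using hmass)
    rw [Measure.restrict_congr_set Ioc_ae_eq_Icc] at this
    exact (ae_restrict_iff' measurableSet_Icc).mp this
  · simpa using hppos.trans_le (hp.integral_mono hτ₀ hxy.le hτ₁)
  · rw [intervalIntegral.integral_comp_add_right n, sub_add_cancel, add_right_comm,
      sub_add_cancel]
    exact hright d hd
  · rw [intervalIntegral.integral_comp_add_right n, neg_add_eq_sub, zero_add]
    exact hleft d hd

theorem isSuperlinear_comp_max_zero {g : ℝ → ℝ} (hlip : LocallyLipschitzOn (Ici 0) g)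
    (hpos : ∀ s > 0, 0 < g s) (hzero : g =o[nhdsWithin 0 (Ici 0)] id)
    (htop : Tendsto (fun s => g s / s) atTop atTop) : IsSuperlinear fun s => g (max s 0) := by
  have hproj : Tendsto (fun s : ℝ => max s 0) (nhds 0) (nhdsWithin 0 (Ici 0)) := by
    refine tendsto_nhdsWithin_iff.mpr ⟨?_, .of_forall fun s => le_max_right s 0⟩
    simpa using (continuous_id.max (continuous_const (y := (0 : ℝ)))).tendsto 0
  have hg₀ : g 0 = 0 := hzero.isBigO.eq_zero_imp.self_of_nhdsWithin self_mem_Ici rfl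
  refine ⟨fun s hs => by rw [max_eq_right hs, hg₀], fun s hs => ?_, fun R => ?_, ?_, ?_⟩
  · rw [max_eq_left (le_of_lt hs)]
    exact hpos s hs
  · obtain ⟨L, hL⟩ := (hlip.mono (s := Icc 0 (max R 0)) Icc_subset_Ici_self
      ).exists_lipschitzOnWith_of_compact isCompact_Icc
    exact ⟨L * 1, hL.comp (LipschitzWith.id.max_const 0).lipschitzOnWith fun s hs =>
      ⟨le_max_right _ _, max_le_max_right 0 hs⟩⟩
  · refine (hzero.comp_tendsto hproj).trans_isBigO (Asymptotics.isBigO_of_le _ fun s => ?_)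
    simpa using abs_max_sub_max_le_abs s 0 0
  · refine htop.congr' ?_
    filter_upwards [eventually_ge_atTop 0] with s hs
    rw [max_eq_left hs]

theorem SolvesOn.isSol {f : ℝ → ℝ → ℝ} {u v : ℝ → ℝ} (h : SolvesOn (fun t => f t (u t)) u v univ) :
    IsSol f u :=
  ⟨v, h.hasDerivAt, fun t => ⟨Ioc (t - 1) (t + 1), Ioc_mem_nhds (by linarith) (by linarith),
    (h.intervalIntegrable _ _).1⟩, fun t => h.slope_eq (mem_univ 0) (mem_univ t)⟩

theorem IsSubharmonic.comp_add_right {u : ℝ → ℝ} {T : ℝ} {k : ℕ} (h : IsSubharmonic u T k)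
    (c : ℝ) : IsSubharmonic (fun t => u (t + c)) T k :=
  ⟨h.1.add_const c, fun ℓ hℓ hℓk hper => h.2 ℓ hℓ hℓk (by simpa using hper.add_const (-c))⟩

theorem SignCond.exists_posOn {q : ℝ → ℝ} {T : ℝ} {m : ℕ} (hm : 1 ≤ m) (h : SignCond q T m) :
    ∃ x y, PosOn q (Icc x y) := by
  obtain ⟨σ, -, -, -, hpos, -⟩ := h
  exact ⟨_, _, hpos 0 hm⟩

theorem SignCond.not_ae_nonneg {q : ℝ → ℝ} {T : ℝ} {m : ℕ} (hm : 1 ≤ m) (h : SignCond q T m) :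
    ¬∀ᵐ t ∂volume.restrict (Icc 0 T), 0 ≤ q t := by
  obtain ⟨σ, hσ₀, hσT, hσ, -, hneg⟩ := h
  have hmono : MonotoneOn σ (Iic (2 * m)) := (strictMonoOn_Iic_of_lt_succ hσ).monotoneOn
  have hsub : Icc (σ 1) (σ 2) ⊆ Icc 0 T := by
    refine Icc_subset_Icc ?_ ?_
    · exact hσ₀ ▸ hmono (mem_Iic.mpr (by omega)) (mem_Iic.mpr (by omega)) zero_le_one
    · exact hσT ▸ hmono (mem_Iic.mpr (by omega)) self_mem_Iic (by omega)
  exact fun hq => (hneg 0 hm).not_ae_nonpos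
    ((ae_restrict_of_ae_restrict_of_subset hsub hq).mono fun t ht => neg_nonpos.mpr ht)

theorem isLittleO_id_of_derivWithin_eq_zero {g : ℝ → ℝ} (hg : ContDiffOn ℝ 1 g (Ici 0))
    (hg₀ : g 0 = 0) (hg' : derivWithin g (Ici 0) 0 = 0) : g =o[nhdsWithin 0 (Ici 0)] id := by
  have := (hg.differentiableOn one_ne_zero 0 self_mem_Ici).hasDerivWithinAt
  rw [hg', hasDerivWithinAt_iff_isLittleO] at this
  simp only [hg₀, sub_zero, smul_zero] at this
  exact this

theorem stmt1_general {T : ℝ} (hT : 0 < T) {a : ℝ → ℝ} (haper : Function.Periodic a T)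
    (haloc : LocallyIntegrable a) (hapos : ∃ x y, PosOn a (Icc x y))
    (haneg : ¬∀ᵐ t ∂volume.restrict (Icc 0 T), 0 ≤ a t)
    {g : ℝ → ℝ} (hglip : LocallyLipschitzOn (Ici 0) g) (hgpos : ∀ s > 0, 0 < g s)
    (hgzero : g =o[nhdsWithin 0 (Ici 0)] id) (hgtop : Tendsto (fun s => g s / s) atTop atTop) :
    ∃ μ₀ > 0, ∀ μ > μ₀, ∀ k ≥ 1, ∃ u : ℝ → ℝ,
      IsSol (fun t s => (max (a t) 0 - μ * max (-a t) 0) * g s) u ∧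
      (∀ t, 0 < u t) ∧ IsSubharmonic u T k := by
  obtain ⟨x, y, hapos⟩ := hapos
  have hper_neg : Function.Periodic (fun t => -a t) T := fun t => congrArg Neg.neg (haper t)
  have hn_pos : 0 < ∫ t in 0..T, max (-a t) 0 :=
    (integral_max_zero_pos_iff hT.le haloc.neg).mpr (by simpa only [Pi.neg_apply, neg_nonpos])
  have hn_zero : ∫ t in x..y, max (-a t) 0 = 0 :=
    (integral_max_zero_eq_zero_iff hapos.lt.le haloc.neg).mpr
      (by simpa only [Pi.neg_apply, neg_nonpos] using hapos.1)
  obtain ⟨τ, σ, hw⟩ := exists_isIndefiniteWeight_shift (isWeight_max_zero haper haloc)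
    (isWeight_max_zero hper_neg haloc.neg) hT hn_pos hapos.lt hn_zero
    ((integral_max_zero_pos_iff hapos.lt.le haloc).mpr hapos.not_ae_nonpos)
  obtain ⟨μ₀, hμ₀, H⟩ := exists_isSubharmonic_solvesOn hw
    (isSuperlinear_comp_max_zero hglip hgpos hgzero hgtop)
  refine ⟨μ₀, hμ₀, fun μ hμ k hk => ?_⟩
  obtain ⟨u, v, hsol, hpos, hsub⟩ := H μ hμ k hk
  refine ⟨fun t => u (t + -τ), SolvesOn.isSol (v := fun t => v (t + -τ)) ?_, fun t => hpos _,
    hsub.comp_add_right (-τ)⟩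
  simpa only [max_eq_left (hpos _).le, neg_add_cancel_right, preimage_univ]
    using hsol.comp_add_right (-τ)

/-- Theorem 1.2: for `μ` large, `u'' + (a⁺(t) - μ a⁻(t)) g(u) = 0` has a
positive subharmonic solution of every order `k ≥ 2`. -/
theorem stmt1 (T : ℝ) (hT : 0 < T) (a : ℝ → ℝ)
    (haper : Function.Periodic a T)
    (haloc : MeasureTheory.LocallyIntegrable a MeasureTheory.volume)
    (m : ℕ) (hm : 1 ≤ m) (hasign : SignCond a T m)
    (g : ℝ → ℝ) (hgC1 : ContDiffOn ℝ 1 g (Set.Ici 0))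
    (hg0 : g 0 = 0) (hgpos : ∀ s : ℝ, 0 < s → 0 < g s)
    (hg'0 : derivWithin g (Set.Ici 0) 0 = 0)
    (hgsup : Filter.Tendsto (fun s => g s / s) Filter.atTop Filter.atTop) :
    ∃ μstar : ℝ, 0 < μstar ∧ ∀ μ : ℝ, μstar < μ → ∀ k : ℕ, 2 ≤ k →
      ∃ u : ℝ → ℝ,
        IsSol (fun t s => (max (a t) 0 - μ * max (-a t) 0) * g s) u ∧
        (∀ t, 0 < u t) ∧ IsSubharmonic u T k := by
  obtain ⟨μ₀, hμ₀, H⟩ := stmt1_general hT haper haloc (hasign.exists_posOn hm)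
    (hasign.not_ae_nonneg hm) (hgC1.locallyLipschitzOn (convex_Ici 0)) hgpos
    (isLittleO_id_of_derivWithin_eq_zero hgC1 hg0 hg'0) hgsup
  exact ⟨μ₀, hμ₀, fun μ hμ k hk => H μ hμ k (one_le_two.trans hk)⟩
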